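/- For every fixed integer d ≥ 1, as the integer b → ∞ (with b > d), I(b,d,2) = b·log b + a₁/b³ + a₂/b⁴ + a₃/b⁵ + a₄/b⁶ + a₅/b⁷ + O(b⁻⁸), where: a₁ = (d + 1/2)/d²; a₂ = −(d + 1/2)/(d²(d+1)); a₃ = (d + 1/2)ζ(2) − (30d³ + 70d² + 47d + 10)/(12d³(d+1)²); a₄ = −(2d+1)d·ζ(3) + (2d+1)ζ(2) − (12d⁶ − 60d⁵ − 258d⁴ − 342d³ − 212d² − 61d − 6)/(12d⁴(d+1)³); a₅ = 3(d + 1/2)d²ζ(4) − (d + 1/2)(6d+1)ζ(3) − (60d⁷ + 240d⁶ + 440d⁵ + 561d⁴ + 465d³ + 219d² + 54d + 6)/(12d⁵(d+1)³). -/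

import Mathlib

open Filter Asymptotics

/-- The Irwin harmonic sum `I(b,d,k)`: sum of `1/m` over positive integers `m`
whose base-`b` digit list contains the digit `d` exactly `k` times. -/
noncomputable def irwinSum (b d k : ℕ) : ℝ :=
  ∑' m : ℕ, if 0 < m ∧ (Nat.digits b m).count d = k then (1 : ℝ) / m else 0

/-- `ζ(s) = ∑_{n ≥ 1} n^{-s}` for an integer exponent. -/
noncomputable def zetaR (s : ℕ) : ℝ := ∑' n : ℕ, 1 / ((n : ℝ) + 1) ^ s

namespace Irwin

/-- Weighted sum of `f` over the base-`b` strings of length `l` with exactly `k` digits `d`. -/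
noncomputable def Phi (b d : ℕ) : ℕ → ℤ → (ℝ → ℝ) → ℝ
  | 0, k, f => if k = 0 then f 0 else 0
  | l + 1, k, f => (1 / (b : ℝ)) * ∑ a ∈ Finset.range b,
      Phi b d l (k - if a = d then 1 else 0) (fun x => f (((a : ℝ) + x) / b))

lemma map_mem {b a : ℕ} (ha : a < b) {x : ℝ} (hx : x ∈ Set.Icc (0 : ℝ) 1) :
    ((a : ℝ) + x) / b ∈ Set.Icc (0 : ℝ) 1 := by
  have hb : (0 : ℝ) < b := by exact_mod_cast (by omega : 0 < b)
  have hab : (a : ℝ) + 1 ≤ b := by exact_mod_cast ha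
  obtain ⟨h0, h1⟩ := hx
  have ha0 : (0 : ℝ) ≤ a := Nat.cast_nonneg a
  constructor
  · positivity
  · rw [div_le_one hb]; linarith

lemma Phi_congr (b d l : ℕ) : ∀ (k : ℤ) {f g : ℝ → ℝ},
    (∀ x ∈ Set.Icc (0 : ℝ) 1, f x = g x) → Phi b d l k f = Phi b d l k g := by
  induction l with
  | zero => intro k f g h; simp [Phi, h 0 (by simp)]
  | succ l ih =>
    intro k f g h
    simp only [Phi]
    congr 1
    refine Finset.sum_congr rfl fun a ha => ih _ fun x hx => h _ (map_mem (Finset.mem_range.1 ha) hx)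

lemma Phi_add (b d l : ℕ) : ∀ (k : ℤ) (f g : ℝ → ℝ),
    Phi b d l k (fun x => f x + g x) = Phi b d l k f + Phi b d l k g := by
  induction l with
  | zero => intro k f g; simp only [Phi]; split_ifs <;> simp
  | succ l ih =>
    intro k f g
    simp only [Phi, ← mul_add, ← Finset.sum_add_distrib, ← ih]

lemma Phi_smul (b d l : ℕ) : ∀ (k : ℤ) (c : ℝ) (f : ℝ → ℝ),
    Phi b d l k (fun x => c * f x) = c * Phi b d l k f := by
  induction l with
  | zero => intro k c f; simp only [Phi]; split_ifs <;> simp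
  | succ l ih =>
    intro k c f
    simp only [Phi, ih, ← Finset.mul_sum]; ring

lemma Phi_neg (b d l : ℕ) : ∀ (k : ℤ) (f : ℝ → ℝ), k < 0 → Phi b d l k f = 0 := by
  induction l with
  | zero => intro k f h; simp [Phi, h.ne]
  | succ l ih =>
    intro k f h
    simp only [Phi]
    rw [Finset.sum_eq_zero, mul_zero]
    intro a _
    apply ih
    split_ifs <;> omega

lemma Phi_nonneg (b d l : ℕ) : ∀ (k : ℤ) (f : ℝ → ℝ),
    (∀ x ∈ Set.Icc (0 : ℝ) 1, 0 ≤ f x) → 0 ≤ Phi b d l k f := by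
  induction l with
  | zero => intro k f h; simp only [Phi]; split_ifs; exacts [h 0 (by simp), le_rfl]
  | succ l ih =>
    intro k f h
    simp only [Phi]
    refine mul_nonneg (by positivity) (Finset.sum_nonneg fun a ha => ih _ _ fun x hx =>
      h _ (map_mem (Finset.mem_range.1 ha) hx))

lemma Phi_abs_le (b d l : ℕ) (k : ℤ) (f : ℝ → ℝ) (C : ℝ)
    (h : ∀ x ∈ Set.Icc (0 : ℝ) 1, |f x| ≤ C) :
    |Phi b d l k f| ≤ C * Phi b d l k (fun _ => 1) := by
  have h1 := Phi_nonneg b d l k (fun x => C * 1 + f x)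
    (fun x hx => by have := abs_le.1 (h x hx); linarith)
  have h2 := Phi_nonneg b d l k (fun x => C * 1 + (-1) * f x)
    (fun x hx => by have := abs_le.1 (h x hx); linarith)
  rw [Phi_add b d l k (fun _ => C * 1), Phi_smul b d l k C (fun _ => 1)] at h1
  rw [Phi_add b d l k (fun _ => C * 1), Phi_smul b d l k C (fun _ => 1), Phi_smul] at h2
  rw [abs_le]; constructor <;> linarith

lemma sum_split (b d : ℕ) (hdb : d < b) (f : ℕ → ℤ → ℝ) (k : ℤ) :
    ∑ a ∈ Finset.range b, f a (k - if a = d then 1 else 0)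
      = f d (k - 1) + ∑ a ∈ (Finset.range b).erase d, f a k := by
  rw [← Finset.add_sum_erase _ _ (Finset.mem_range.2 hdb)]
  congr 1
  · simp
  · refine Finset.sum_congr rfl fun a ha => ?_
    simp [Finset.ne_of_mem_erase ha]

lemma mass_rec (b d l : ℕ) (hdb : d < b) (k : ℤ) :
    Phi b d (l + 1) k (fun _ => 1)
      = (1 - 1 / (b : ℝ)) * Phi b d l k (fun _ => 1)
        + (1 / (b : ℝ)) * Phi b d l (k - 1) (fun _ => 1) := by
  have hb : (b : ℝ) ≠ 0 := by exact_mod_cast (by omega : b ≠ 0)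
  simp only [Phi]
  rw [sum_split b d hdb (fun _ k => Phi b d l k (fun _ => 1))]
  rw [Finset.sum_const, Finset.card_erase_of_mem (Finset.mem_range.2 hdb), Finset.card_range,
    nsmul_eq_mul, Nat.cast_sub (by omega)]
  field_simp
  push_cast
  ring

lemma mass_summable_aux (u v : ℕ → ℝ) (r s : ℝ) (hr0 : 0 ≤ r) (hr : r < 1) (hs : 0 ≤ s)
    (hu : ∀ l, 0 ≤ u l) (hv0 : ∀ l, 0 ≤ v l)
    (hv : Summable v) (h : ∀ l, u (l + 1) = r * u l + s * v l) : Summable u := by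
  refine summable_of_sum_range_le (c := (u 0 + s * ∑' l, v l) / (1 - r)) hu ?_
  intro n
  rw [le_div_iff₀ (by linarith)]
  have h1 : ∑ i ∈ Finset.range (n + 1), u i = u 0 + r * ∑ i ∈ Finset.range n, u i
      + s * ∑ i ∈ Finset.range n, v i := by
    rw [Finset.sum_range_succ', Finset.mul_sum, Finset.mul_sum, add_assoc,
      ← Finset.sum_add_distrib, add_comm]
    simp [h]
  have h2 : ∑ i ∈ Finset.range n, u i ≤ ∑ i ∈ Finset.range (n + 1), u i := by
    rw [Finset.sum_range_succ]; linarith [hu n]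
  have h3 : ∑ i ∈ Finset.range n, v i ≤ ∑' l, v l := hv.sum_le_tsum _ (fun i _ => hv0 i)
  nlinarith [mul_le_mul_of_nonneg_left h3 hs]

lemma mass_summable (b d : ℕ) (hdb : d < b) (k : ℕ) :
    Summable (fun l => Phi b d l (k : ℤ) (fun _ => 1)) ∧
      ∑' l, Phi b d l (k : ℤ) (fun _ => 1) = b := by
  have hb : (1 : ℝ) ≤ b := by exact_mod_cast (by omega : 1 ≤ b)
  have hr0 : (0 : ℝ) ≤ 1 - 1 / (b : ℝ) := by
    rw [sub_nonneg, div_le_one (by linarith)]; exact hb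
  have hr1 : (1 : ℝ) - 1 / (b : ℝ) < 1 := by
    have : 0 < 1 / (b : ℝ) := by positivity
    linarith
  have key : ∀ (k : ℤ) (V : ℝ), Summable (fun l => Phi b d l (k - 1) (fun _ => 1)) →
      ∑' l, Phi b d l (k - 1) (fun _ => 1) = V →
      Summable (fun l => Phi b d l k (fun _ => 1)) ∧
      ∑' l, Phi b d l k (fun _ => 1) = b * (if k = 0 then 1 else 0) + V := by
    intro k V hs hV
    have hsum : Summable (fun l => Phi b d l k (fun _ => 1)) :=
      mass_summable_aux _ _ _ _ hr0 hr1 (by positivity)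
        (fun l => Phi_nonneg _ _ _ _ _ (by simp)) (fun l => Phi_nonneg _ _ _ _ _ (by simp)) hs
        (fun l => mass_rec b d l hdb k)
    refine ⟨hsum, ?_⟩
    have h1 := hsum.tsum_eq_zero_add
    simp only [mass_rec b d _ hdb k] at h1
    rw [Summable.tsum_add (hsum.mul_left _) (hs.mul_left _), tsum_mul_left, tsum_mul_left, hV] at h1
    have h0 : Phi b d 0 k (fun _ => 1) = if k = 0 then 1 else 0 := rfl
    rw [h0] at h1
    set X := ∑' l, Phi b d l k (fun _ => 1)
    have : b * X = b * ((if k = 0 then 1 else 0) + ((1 - 1 / (b : ℝ)) * X + 1 / (b : ℝ) * V)) := by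
      rw [← h1]
    field_simp at this
    linarith
  induction k with
  | zero =>
    have := key 0 0 (by simpa [Phi_neg] using summable_zero) (by simp [Phi_neg])
    simpa using this
  | succ k ih =>
    have := key ((k + 1 : ℕ) : ℤ) b (by simpa using ih.1) (by simpa using ih.2)
    refine ⟨this.1, this.2.trans ?_⟩
    rw [if_neg (by omega)]; ring

/-- Continuity on the unit interval. -/
abbrev CU (f : ℝ → ℝ) : Prop := ContinuousOn f (Set.Icc (0 : ℝ) 1)

lemma CU.comp_map {f : ℝ → ℝ} (hf : CU f) {a b : ℕ} (ha : a < b) :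
    CU (fun x => f (((a : ℝ) + x) / b)) := by
  refine ContinuousOn.comp (t := Set.Icc (0 : ℝ) 1) hf (by fun_prop) ?_
  intro x hx
  exact map_mem ha hx

lemma Phi_summable (b d : ℕ) (hdb : d < b) (k : ℤ) {f : ℝ → ℝ} (hf : CU f) :
    Summable (fun l => Phi b d l k f) := by
  rcases lt_or_ge k 0 with hk | hk
  · simpa [Phi_neg _ _ _ _ _ hk] using summable_zero
  · obtain ⟨n, rfl⟩ := Int.eq_ofNat_of_zero_le hk
    obtain ⟨C, hC⟩ := isCompact_Icc.exists_bound_of_continuousOn hf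
    refine Summable.of_norm_bounded ((mass_summable b d hdb n).1.mul_left C) fun l => ?_
    exact Phi_abs_le b d l _ f C hC

/-- The functional `∫ f dμ_k`. -/
noncomputable def F (b d : ℕ) (k : ℤ) (f : ℝ → ℝ) : ℝ := ∑' l, Phi b d l k f

lemma F_neg (b d : ℕ) (k : ℤ) (hk : k < 0) (f : ℝ → ℝ) : F b d k f = 0 := by
  simp [F, Phi_neg _ _ _ _ _ hk]

lemma F_rec (b d : ℕ) (hdb : d < b) (k : ℤ) {f : ℝ → ℝ} (hf : CU f) :
    F b d k f = (if k = 0 then f 0 else 0) + (1 / (b : ℝ)) *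
      ∑ a ∈ Finset.range b, F b d (k - if a = d then 1 else 0) (fun x => f (((a : ℝ) + x) / b)) := by
  unfold F
  rw [(Phi_summable b d hdb k hf).tsum_eq_zero_add]
  congr 1
  simp only [Phi]
  rw [tsum_mul_left, Summable.tsum_finsetSum]
  intro a ha
  exact Phi_summable b d hdb _ (hf.comp_map (Finset.mem_range.1 ha))

/-- Deviation of `μ_k` from `b` times Lebesgue measure. -/
noncomputable def D (b d : ℕ) (k : ℤ) (f : ℝ → ℝ) : ℝ :=
  F b d k f - b * ∫ x in (0 : ℝ)..1, f x

lemma CU.ii {f : ℝ → ℝ} (hf : CU f) : IntervalIntegrable f MeasureTheory.volume 0 1 :=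
  ContinuousOn.intervalIntegrable (by simpa [Set.uIcc_of_le] using hf)

lemma D_add (b d : ℕ) (hdb : d < b) (k : ℤ) {f g : ℝ → ℝ} (hf : CU f) (hg : CU g) :
    D b d k (fun x => f x + g x) = D b d k f + D b d k g := by
  unfold D F
  simp only [Phi_add]
  rw [Summable.tsum_add (Phi_summable b d hdb k hf) (Phi_summable b d hdb k hg),
    intervalIntegral.integral_add hf.ii hg.ii]
  ring

lemma D_smul (b d : ℕ) (k : ℤ) (c : ℝ) (f : ℝ → ℝ) :
    D b d k (fun x => c * f x) = c * D b d k f := by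
  unfold D F
  simp only [Phi_smul]
  rw [tsum_mul_left, intervalIntegral.integral_const_mul]
  ring

lemma D_congr (b d : ℕ) (k : ℤ) {f g : ℝ → ℝ} (h : ∀ x ∈ Set.Icc (0 : ℝ) 1, f x = g x) :
    D b d k f = D b d k g := by
  unfold D F
  rw [intervalIntegral.integral_congr (g := g) (by
    intro x hx; exact h x (by simpa [Set.uIcc_of_le] using hx))]
  simp only [Phi_congr b d _ k h]

lemma D_zero (b d : ℕ) (k : ℤ) : D b d k (fun _ => 0) = 0 := by
  simpa using D_smul b d k 0 (fun _ => 0)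

lemma D_sum {ι : Type*} (b d : ℕ) (hdb : d < b) (k : ℤ) (s : Finset ι) (f : ι → ℝ → ℝ)
    (hf : ∀ i ∈ s, CU (f i)) :
    D b d k (fun x => ∑ i ∈ s, f i x) = ∑ i ∈ s, D b d k (f i) := by
  classical
  induction s using Finset.induction_on with
  | empty => simp [D_zero]
  | insert i s hi ih =>
    simp only [Finset.sum_insert hi]
    rw [D_add b d hdb k (hf i (by simp))
      (continuousOn_finset_sum _ fun j hj => hf j (by simp [hj])), ih]
    intro j hj; exact hf j (by simp [hj])

lemma D_one (b d : ℕ) (hdb : d < b) (k : ℕ) : D b d k (fun _ => 1) = 0 := by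
  unfold D F
  rw [(mass_summable b d hdb k).2]; simp

lemma integral_rec (b : ℕ) (hb : 0 < b) {f : ℝ → ℝ} (hf : CU f) :
    ∫ x in (0 : ℝ)..1, f x = (1 / (b : ℝ)) *
      ∑ a ∈ Finset.range b, ∫ x in (0 : ℝ)..1, f (((a : ℝ) + x) / b) := by
  have hb' : (b : ℝ) ≠ 0 := by positivity
  have h1 : ∀ a : ℕ, ∫ x in (0 : ℝ)..1, f (((a : ℝ) + x) / b)
      = b * ∫ x in ((a : ℝ) / b)..(((a + 1 : ℕ) : ℝ) / b), f x := by
    intro a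
    have := intervalIntegral.integral_comp_add_div (a := 0) (b := 1) f hb' ((a : ℝ) / b)
    simp only [smul_eq_mul] at this
    rw [show (fun x : ℝ => f (((a : ℝ) + x) / b)) = fun x : ℝ => f ((a : ℝ) / b + x / b) by
      ext x; rw [add_div], this]
    congr 2
    · simp
    · push_cast; rw [add_div]
  simp only [h1, ← Finset.mul_sum]
  rw [intervalIntegral.sum_integral_adjacent_intervals (f := f) (a := fun a : ℕ => (a : ℝ) / b)]
  · simp [hb']
  · intro a ha
    refine ContinuousOn.intervalIntegrable (hf.mono ?_)
    have hab : (a : ℝ) / b ≤ ((a + 1 : ℕ) : ℝ) / b := by gcongr; simp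
    rw [Set.uIcc_of_le hab]
    refine Set.Icc_subset_Icc (by positivity) ?_
    rw [div_le_one (by positivity)]
    exact_mod_cast ha

lemma D_rec (b d : ℕ) (hdb : d < b) (k : ℤ) (hk : k ≠ 0) {f : ℝ → ℝ} (hf : CU f) :
    D b d k f = (1 / (b : ℝ)) * (D b d (k - 1) (fun x => f (((d : ℝ) + x) / b)) +
      ∑ a ∈ (Finset.range b).erase d, D b d k (fun x => f (((a : ℝ) + x) / b))) := by
  have h1 := sum_split b d hdb (fun a k => D b d k (fun x => f (((a : ℝ) + x) / b))) k
  rw [← h1]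
  unfold D
  rw [F_rec b d hdb k hf, if_neg hk, integral_rec b (by omega) hf, Finset.sum_sub_distrib,
    ← Finset.mul_sum]
  ring

lemma D_rec_zero (b d : ℕ) (hdb : d < b) {f : ℝ → ℝ} (hf : CU f) :
    D b d 0 f = f 0 - (∫ x in (0 : ℝ)..1, f (((d : ℝ) + x) / b)) + (1 / (b : ℝ)) * (
      ∑ a ∈ (Finset.range b).erase d, D b d 0 (fun x => f (((a : ℝ) + x) / b))) := by
  have hb : (b : ℝ) ≠ 0 := by exact_mod_cast (by omega : b ≠ 0)
  have h1 := sum_split b d hdb (fun a k => D b d k (fun x => f (((a : ℝ) + x) / b))) 0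
  have h2 : D b d (0 - 1) (fun x => f (((d : ℝ) + x) / b))
      = - b * ∫ x in (0 : ℝ)..1, f (((d : ℝ) + x) / b) := by
    unfold D; rw [F_neg _ _ _ (by norm_num)]; ring
  rw [h2] at h1
  have h3 : ∑ a ∈ (Finset.range b).erase d, D b d 0 (fun x => f (((a : ℝ) + x) / b))
    = ∑ a ∈ Finset.range b, D b d (0 - if a = d then 1 else 0) (fun x => f (((a : ℝ) + x) / b))
      + b * ∫ x in (0 : ℝ)..1, f (((d : ℝ) + x) / b) := by
    rw [h1]; ring
  rw [h3]
  unfold D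
  rw [F_rec b d hdb 0 hf, if_pos rfl, integral_rec b (by omega) hf, Finset.sum_sub_distrib,
    ← Finset.mul_sum]
  field_simp
  ring

end Irwin

namespace Irwin

lemma sum_range_block (m q : ℕ) (f : ℕ → ℝ) :
    ∑ n ∈ Finset.range (m * q), f n
      = ∑ c ∈ Finset.range m, ∑ n ∈ Finset.range q, f (c * q + n) := by
  induction m with
  | zero => simp
  | succ m ih => rw [Nat.succ_mul, Finset.sum_range_add, Finset.sum_range_succ, ih]

lemma digits_count (b d a c : ℕ) (hb : 1 < b) (ha : 1 ≤ a) (hc : c < b) :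
    (((Nat.digits b (a * b + c)).count d : ℕ) : ℤ)
      = (Nat.digits b a).count d + if c = d then 1 else 0 := by
  have h : Nat.digits b (c + b * a) = c :: Nat.digits b a :=
    Nat.digits_add b hb c a hc (Or.inr (by omega))
  rw [show a * b + c = c + b * a by ring, h, List.count_cons]
  by_cases hcd : c = d <;> simp [hcd]

lemma CU_inv (A : ℝ) (hA : 0 < A) : CU (fun x => 1 / (A + x)) := by
  refine ContinuousOn.div (by fun_prop) (by fun_prop) fun x hx => ?_
  have := hx.1; positivity

lemma block_sum (b d : ℕ) (hb : 1 < b) (K : ℤ) (l : ℕ) : ∀ a : ℕ, 1 ≤ a →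
    ∑ n ∈ Finset.range (b ^ l),
      (if (((Nat.digits b (a * b ^ l + n)).count d : ℕ) : ℤ) = K
        then (1 : ℝ) / ((a * b ^ l + n : ℕ) : ℝ) else 0)
    = Phi b d l (K - (Nat.digits b a).count d) (fun x => 1 / ((a : ℝ) + x)) := by
  induction l with
  | zero =>
    intro a ha
    simp [Phi, sub_eq_zero, eq_comm]
  | succ l ih =>
    intro a ha
    have hb0 : (b : ℝ) ≠ 0 := by positivity
    rw [pow_succ', sum_range_block]
    simp only [Phi]
    rw [Finset.mul_sum]
    refine Finset.sum_congr rfl fun c hc => ?_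
    have hc' := Finset.mem_range.1 hc
    have h1 := ih (a * b + c) (by nlinarith)
    rw [digits_count b d a c hb ha hc'] at h1
    rw [← Phi_smul, sub_sub]
    have h2 : Phi b d l (K - (((Nat.digits b a).count d : ℕ) + if c = d then 1 else 0))
      (fun x => 1 / (b : ℝ) * (1 / ((a : ℝ) + ((c : ℝ) + x) / b)))
      = Phi b d l (K - (((Nat.digits b a).count d : ℕ) + if c = d then 1 else 0))
       (fun x => 1 / (((a * b + c : ℕ) : ℝ) + x)) := by
      refine Phi_congr _ _ _ _ fun x hx => ?_
      have := hx.1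
      have ha' : (0 : ℝ) < a := by exact_mod_cast ha
      push_cast
      field_simp
      try ring
    rw [h2, ← h1]
    refine Finset.sum_congr rfl fun n hn => ?_
    rw [show a * (b * b ^ l) + (c * b ^ l + n) = (a * b + c) * b ^ l + n by ring]

lemma sum_range_pow (b : ℕ) (hb : 1 < b) (g : ℕ → ℝ) (L : ℕ) :
    ∑ m ∈ Finset.range (b ^ L), g m = g 0 + ∑ l ∈ Finset.range L,
      ∑ a ∈ Finset.Ico 1 b, ∑ n ∈ Finset.range (b ^ l), g (a * b ^ l + n) := by
  induction L with
  | zero => simp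
  | succ L ih =>
    rw [pow_succ', sum_range_block, Finset.sum_range_succ, ← add_assoc, ← ih,
      Finset.range_eq_Ico (a := b), Finset.sum_eq_sum_Ico_succ_bot (by omega)]
    simp

lemma irwin_eq (b d k : ℕ) (hb : 1 < b) (hdb : d < b) :
    irwinSum b d k = ∑ a ∈ Finset.Ico 1 b,
      F b d ((k : ℤ) - if a = d then 1 else 0) (fun x => 1 / ((a : ℝ) + x)) := by
  set g : ℕ → ℝ := fun m => if 0 < m ∧ (Nat.digits b m).count d = k then (1 : ℝ) / m else 0 with hg
  have hg0 : ∀ m, 0 ≤ g m := by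
    intro m; simp only [hg]; split_ifs <;> positivity
  have hsm : ∀ a ∈ Finset.Ico 1 b, Summable (fun l =>
      Phi b d l ((k : ℤ) - if a = d then 1 else 0) (fun x => 1 / ((a : ℝ) + x))) := by
    intro a ha
    refine Phi_summable b d hdb _ (CU_inv _ ?_)
    exact_mod_cast (Finset.mem_Ico.1 ha).1
  have hpart : ∀ L, ∑ m ∈ Finset.range (b ^ L), g m = ∑ l ∈ Finset.range L,
      ∑ a ∈ Finset.Ico 1 b,
        Phi b d l ((k : ℤ) - if a = d then 1 else 0) (fun x => 1 / ((a : ℝ) + x)) := by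
    intro L
    rw [sum_range_pow b hb]
    have : g 0 = 0 := by simp [hg]
    rw [this, zero_add]
    refine Finset.sum_congr rfl fun l _ => Finset.sum_congr rfl fun a ha => ?_
    obtain ⟨ha1, ha2⟩ := Finset.mem_Ico.1 ha
    have h1 := block_sum b d hb k l a ha1
    have h2 : (((Nat.digits b a).count d : ℕ) : ℤ) = if a = d then 1 else 0 := by
      rw [Nat.digits_of_lt b a (by omega) ha2, List.count_cons]
      by_cases h : a = d <;> simp [h]
    rw [h2] at h1
    rw [← h1]
    refine Finset.sum_congr rfl fun n _ => ?_
    simp only [hg]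
    have : 0 < a * b ^ l + n := by positivity
    simp only [this, true_and, Nat.cast_inj]
  have hS := summable_sum hsm
  have hlim : Tendsto (fun L => ∑ m ∈ Finset.range (b ^ L), g m) atTop
      (nhds (∑ a ∈ Finset.Ico 1 b,
      F b d ((k : ℤ) - if a = d then 1 else 0) (fun x => 1 / ((a : ℝ) + x)))) := by
    unfold F
    rw [← Summable.tsum_finsetSum hsm]
    simp only [hpart]
    exact hS.hasSum.tendsto_sum_nat
  have hpow : Tendsto (fun L : ℕ => b ^ L) atTop atTop := tendsto_pow_atTop_atTop_of_one_lt hb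
  have hmono : Monotone (fun n => ∑ m ∈ Finset.range n, g m) := by
    intro m n hmn
    exact Finset.sum_le_sum_of_subset_of_nonneg (Finset.range_mono hmn) fun i _ _ => hg0 i
  have hsg : Summable g := by
    obtain ⟨C, hC⟩ := hlim.bddAbove_range
    refine summable_of_sum_range_le (c := C) hg0 fun n => ?_
    refine (hmono (Nat.lt_pow_self hb).le).trans (hC ⟨n, rfl⟩)
  exact tendsto_nhds_unique (hsg.hasSum.tendsto_sum_nat.comp hpow) hlim

lemma sum_log (b : ℕ) (hb : 1 ≤ b) :
    ∑ a ∈ Finset.Ico 1 b, ∫ x in (0 : ℝ)..1, 1 / ((a : ℝ) + x) = Real.log b := by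
  induction b, hb using Nat.le_induction with
  | base => simp
  | succ n hn ih =>
    rw [Finset.sum_Ico_succ_top hn, ih]
    have hn' : (0 : ℝ) < n := by exact_mod_cast hn
    rw [intervalIntegral.integral_comp_add_left (fun x => 1 / x) (n : ℝ),
      integral_one_div_of_pos (by simpa using hn') (by positivity),
      Real.log_div (by positivity) (by positivity)]
    push_cast; simp

/-- The exact formula for the deviation of the Irwin sum from `b log b`. -/
lemma irwin_dev (b d k : ℕ) (hb : 1 < b) (hd : 1 ≤ d) (hdb : d < b) :
    irwinSum b d k - b * Real.log b
      = D b d (k - 1) (fun x => 1 / ((d : ℝ) + x)) + ∑ a ∈ (Finset.Ico 1 b).erase d,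
      D b d k (fun x => 1 / ((a : ℝ) + x)) := by
  rw [irwin_eq b d k hb hdb, ← sum_log b (by omega), Finset.mul_sum, ← Finset.sum_sub_distrib,
    ← Finset.add_sum_erase _ _ (Finset.mem_Ico.2 ⟨hd, hdb⟩)]
  congr 1
  · simp [D]
  · refine Finset.sum_congr rfl fun a ha => ?_
    simp [Finset.ne_of_mem_erase ha, D]

end Irwin

namespace Irwin

/-- Lipschitz bound on the unit interval. -/
def LU (f : ℝ → ℝ) (L : ℝ) : Prop :=
  ∀ x ∈ Set.Icc (0 : ℝ) 1, ∀ y ∈ Set.Icc (0 : ℝ) 1, |f x - f y| ≤ L * |x - y|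

lemma LU.nonneg {f : ℝ → ℝ} {L : ℝ} (h : LU f L) : 0 ≤ L := by
  have := h 1 (by simp) 0 (by simp)
  simp at this
  exact (abs_nonneg _).trans this

lemma LU.cu {f : ℝ → ℝ} {L : ℝ} (h : LU f L) : CU f := by
  have : LipschitzOnWith (Real.toNNReal L) f (Set.Icc 0 1) := by
    refine LipschitzOnWith.of_dist_le_mul fun x hx y hy => ?_
    rw [Real.coe_toNNReal _ h.nonneg]
    exact h x hx y hy
  exact this.continuousOn

lemma LU.comp_map {f : ℝ → ℝ} {L : ℝ} (h : LU f L) {a b : ℕ} (ha : a < b) :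
    LU (fun x => f (((a : ℝ) + x) / b)) (L / b) := by
  intro x hx y hy
  have := h _ (map_mem ha hx) _ (map_mem ha hy)
  refine this.trans_eq ?_
  rw [← sub_div, abs_div, Nat.abs_cast]
  rw [add_sub_add_left_eq_sub]; ring

lemma D_apriori (b d : ℕ) (hdb : d < b) (k : ℕ) {f : ℝ → ℝ} {L : ℝ} (h : LU f L) :
    |D b d k f| ≤ 2 * b * L := by
  have hL := h.nonneg
  set g : ℝ → ℝ := fun x => f x + (-f 0) * 1 with hg
  have hgC : CU g := h.cu.add (Continuous.continuousOn (by fun_prop))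
  have h1 : D b d k f = D b d k g := by
    rw [hg, D_add b d hdb k h.cu (Continuous.continuousOn (by fun_prop)), D_smul b d k (-f 0) (fun _ => 1),
      D_one b d hdb]; ring
  have hgb : ∀ x ∈ Set.Icc (0 : ℝ) 1, |g x| ≤ L := by
    intro x hx
    have := h x hx 0 (by simp)
    simp only [hg, mul_one, ← sub_eq_add_neg]
    refine this.trans ?_
    rw [sub_zero, abs_of_nonneg hx.1]
    nlinarith [hx.2]
  have hF : |F b d k g| ≤ b * L := by
    unfold F
    rw [← Real.norm_eq_abs, ← (mass_summable b d hdb k).2, mul_comm, ← tsum_mul_left]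
    refine tsum_of_norm_bounded ((mass_summable b d hdb k).1.mul_left L).hasSum fun l => ?_
    exact Phi_abs_le b d l _ g L hgb
  have hI : |∫ x in (0 : ℝ)..1, g x| ≤ L := by
    have := intervalIntegral.norm_integral_le_of_norm_le_const (a := 0) (b := 1) (f := g) (C := L)
      (fun x hx => hgb x (by
        rw [Set.uIoc_of_le zero_le_one] at hx; exact ⟨hx.1.le, hx.2⟩))
    simpa using this
  rw [h1]
  unfold D
  calc |F b d k g - b * ∫ x in (0 : ℝ)..1, g x| ≤ |F b d k g| + |b * ∫ x in (0 : ℝ)..1, g x| :=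
        abs_sub _ _
    _ ≤ b * L + b * L := by
        rw [abs_mul, Nat.abs_cast]; gcongr
    _ = _ := by ring

lemma contraction (b d : ℕ) (hdb : d < b) (k : ℕ) (s : ℝ) (hs : 0 ≤ s)
    (h : ∀ B : ℝ, 0 ≤ B → (∀ g L, LU g L → |D b d k g| ≤ B * L) →
      ∀ f L, LU f L → |D b d k f| ≤ (B / 4 + s) * L) :
    ∀ f L, LU f L → |D b d k f| ≤ 2 * s * L := by
  have h1 : ∀ n : ℕ, ∀ f L, LU f L → |D b d k f| ≤ (2 * b * (1 / 4) ^ n + 2 * s) * L := by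
    intro n
    induction n with
    | zero =>
      intro f L hf
      have h0 := D_apriori b d hdb k hf
      have := hf.nonneg
      rw [pow_zero, mul_one, add_mul]
      nlinarith
    | succ n ih =>
      intro f L hf
      have h0 := h _ (by positivity) ih f L hf
      have := hf.nonneg
      refine h0.trans (mul_le_mul_of_nonneg_right ?_ this)
      rw [pow_succ]; linarith
  intro f L hf
  have ht : Tendsto (fun n : ℕ => (2 * b * (1 / 4 : ℝ) ^ n + 2 * s) * L) atTop
      (nhds ((2 * b * 0 + 2 * s) * L)) :=
    ((tendsto_const_nhds.mul (tendsto_pow_atTop_nhds_zero_of_lt_one (by norm_num)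
      (by norm_num))).add tendsto_const_nhds).mul tendsto_const_nhds
  have := ge_of_tendsto' ht fun n => h1 n f L hf
  simpa using this

lemma sum_erase_bound (b d : ℕ) (hdb : d < b) (g : ℕ → ℝ) (B : ℝ)
    (hg : ∀ a ∈ (Finset.range b).erase d, |g a| ≤ B) :
    |(1 / (b : ℝ)) * ∑ a ∈ (Finset.range b).erase d, g a| ≤ (b - 1) / b * B := by
  have h1 : |∑ a ∈ (Finset.range b).erase d, g a| ≤ (b - 1) * B := by
    refine (Finset.abs_sum_le_sum_abs _ _).trans ((Finset.sum_le_sum hg).trans ?_)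
    rw [Finset.sum_const, Finset.card_erase_of_mem (Finset.mem_range.2 hdb), Finset.card_range,
      nsmul_eq_mul, Nat.cast_sub (by omega)]
    simp
  rw [abs_mul, abs_of_nonneg (by positivity : (0 : ℝ) ≤ 1 / b)]
  calc 1 / (b : ℝ) * |∑ a ∈ (Finset.range b).erase d, g a| ≤ 1 / (b : ℝ) * ((b - 1) * B) := by gcongr
    _ = _ := by ring

/-- The constant in the Lipschitz bound for `D b d k`. -/
noncomputable def NN (b d k : ℕ) : ℝ := 2 ^ (k + 1) * ((d : ℝ) + 1) / (b : ℝ) ^ (2 * k + 1)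

lemma NN_nonneg (b d k : ℕ) : 0 ≤ NN b d k := by unfold NN; positivity

lemma quarter (b : ℕ) (hb : 1 < b) : ((b : ℝ) - 1) / b / b ≤ 1 / 4 := by
  have hb' : (0 : ℝ) < b := by positivity
  rw [div_div, div_le_div_iff₀ (by positivity) (by norm_num)]
  nlinarith [sq_nonneg ((b : ℝ) - 2)]

lemma D_bound (b d : ℕ) (hb : 1 < b) (hdb : d < b) (k : ℕ) :
    ∀ f L, LU f L → |D b d k f| ≤ NN b d k * L := by
  have hb' : (0 : ℝ) < b := by positivity
  have hq := quarter b hb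
  induction k with
  | zero =>
    have := contraction b d hdb 0 (((d : ℝ) + 1) / b) (by positivity) ?_
    · intro f L hf
      refine (this f L hf).trans_eq ?_
      simp only [NN]; ring
    intro B hB hBv f L hf
    have hL := hf.nonneg
    rw [Nat.cast_zero, D_rec_zero b d hdb hf.cu]
    have h1 : |f 0 - ∫ x in (0 : ℝ)..1, f (((d : ℝ) + x) / b)| ≤ ((d : ℝ) + 1) / b * L := by
      have e : f 0 - ∫ x in (0 : ℝ)..1, f (((d : ℝ) + x) / b)
          = ∫ x in (0 : ℝ)..1, (f 0 - f (((d : ℝ) + x) / b)) := by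
        rw [intervalIntegral.integral_sub (by simp) (hf.cu.comp_map hdb).ii]; simp
      rw [e]
      have := intervalIntegral.norm_integral_le_of_norm_le_const (a := 0) (b := 1)
        (f := fun x : ℝ => f 0 - f (((d : ℝ) + x) / b)) (C := ((d : ℝ) + 1) / b * L) ?_
      · simpa using this
      intro x hx
      rw [Set.uIoc_of_le zero_le_one] at hx
      have hx' : x ∈ Set.Icc (0 : ℝ) 1 := ⟨hx.1.le, hx.2⟩
      have := hf 0 (by simp) _ (map_mem hdb hx')
      refine this.trans ?_
      rw [zero_sub, abs_neg, abs_of_nonneg (map_mem hdb hx').1, mul_comm]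
      gcongr
      exact hx.2
    have h2 := sum_erase_bound b d hdb (fun a => D b d 0 (fun x => f (((a : ℝ) + x) / b))) (B * (L / b))
      (fun a ha => by
        simpa using hBv _ _ (hf.comp_map (Finset.mem_range.1 (Finset.mem_of_mem_erase ha))))
    refine (abs_add_le _ _).trans ((add_le_add h1 h2).trans ?_)
    have : ((b : ℝ) - 1) / b * (B * (L / b)) = (((b : ℝ) - 1) / b / b) * (B * L) := by ring
    rw [this]
    nlinarith [mul_le_mul_of_nonneg_right hq (mul_nonneg hB hL)]
  | succ k ih =>
    have := contraction b d hdb (k + 1) (NN b d k / b ^ 2) (by have := NN_nonneg b d k; positivity) ?_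
    · intro f L hf
      refine (this f L hf).trans_eq ?_
      simp only [NN]
      field_simp
      ring
    intro B hB hBv f L hf
    have hL := hf.nonneg
    rw [D_rec b d hdb _ (by positivity) hf.cu, mul_add]
    have h1 := ih _ _ (hf.comp_map hdb)
    have h2 := sum_erase_bound b d hdb
      (fun a => D b d ((k + 1 : ℕ) : ℤ) (fun x => f (((a : ℝ) + x) / b))) (B * (L / b))
      (fun a ha => hBv _ _ (hf.comp_map (Finset.mem_range.1 (Finset.mem_of_mem_erase ha))))
    have h3 : |1 / (b : ℝ) * D b d (((k + 1 : ℕ) : ℤ) - 1) (fun x => f (((d : ℝ) + x) / b))|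
        ≤ NN b d k / b ^ 2 * L := by
      rw [show (((k + 1 : ℕ) : ℤ) - 1) = (k : ℤ) by push_cast; ring, abs_mul,
        abs_of_nonneg (by positivity : (0 : ℝ) ≤ 1 / b)]
      calc 1 / (b : ℝ) * |D b d k (fun x => f (((d : ℝ) + x) / b))|
          ≤ 1 / (b : ℝ) * (NN b d k * (L / b)) := by gcongr
        _ = _ := by field_simp
    refine (abs_add_le _ _).trans ((add_le_add h3 h2).trans ?_)
    have : ((b : ℝ) - 1) / b * (B * (L / b)) = (((b : ℝ) - 1) / b / b) * (B * L) := by ring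
    rw [this]
    nlinarith [mul_le_mul_of_nonneg_right hq (mul_nonneg hB hL)]

/-- The moments of the deviation functional. -/
noncomputable def M (b d k m : ℕ) : ℝ := D b d k (fun x => x ^ m)

lemma CU_pow (m : ℕ) : CU (fun x => x ^ m) := Continuous.continuousOn (by fun_prop)

lemma M_zero (b d : ℕ) (hdb : d < b) (k : ℕ) : M b d k 0 = 0 := by
  simpa [M] using D_one b d hdb k

lemma D_shift_pow (b d : ℕ) (hdb : d < b) (k m a : ℕ) :
    D b d k (fun x => (((a : ℝ) + x) / b) ^ m)
      = (1 / (b : ℝ)) ^ m * ∑ i ∈ Finset.range (m + 1), (m.choose i : ℝ) * (a : ℝ) ^ (m - i) * M b d k i := by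
  have : (fun x : ℝ => (((a : ℝ) + x) / b) ^ m) = fun x => (1 / (b : ℝ)) ^ m *
      ∑ i ∈ Finset.range (m + 1), ((m.choose i : ℝ) * (a : ℝ) ^ (m - i)) * x ^ i := by
    ext x
    rw [add_comm, div_eq_mul_one_div, mul_pow, add_pow, mul_comm]
    congr 1
    refine Finset.sum_congr rfl fun i _ => by ring
  rw [this, D_smul, D_sum b d hdb]
  · congr 1
    refine Finset.sum_congr rfl fun i _ => ?_
    rw [D_smul]; rfl
  · intro i _; exact Continuous.continuousOn (by fun_prop)

lemma M_rec (b d : ℕ) (hdb : d < b) (k m : ℕ) :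
    M b d (k + 1) m = (1 / (b : ℝ)) ^ (m + 1) *
      (∑ i ∈ Finset.range (m + 1), (m.choose i : ℝ) * (d : ℝ) ^ (m - i) * M b d k i
      + ∑ i ∈ Finset.range (m + 1), (m.choose i : ℝ) *
          (∑ a ∈ (Finset.range b).erase d, (a : ℝ) ^ (m - i)) * M b d (k + 1) i) := by
  have h1 : ∀ a, D b d ((k + 1 : ℕ) : ℤ) (fun x => (((a : ℕ) + x) / b) ^ m) = _ :=
    D_shift_pow b d hdb (k + 1) m
  have h2 := D_shift_pow b d hdb k m d
  conv_lhs => unfold M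
  rw [D_rec b d hdb _ (by positivity) (CU_pow m),
    show (((k + 1 : ℕ) : ℤ) - 1) = (k : ℤ) by push_cast; ring, h2, Finset.sum_congr rfl fun a _ => h1 a,
    ← Finset.mul_sum, ← mul_add, ← mul_assoc, ← pow_succ', Finset.sum_comm]
  congr 2
  refine Finset.sum_congr rfl fun i _ => ?_
  rw [Finset.mul_sum, Finset.sum_mul]

lemma M_rec_zero (b d : ℕ) (hdb : d < b) (m : ℕ) (hm : m ≠ 0) :
    M b d 0 m = - ((1 / (b : ℝ)) ^ m * ((((d : ℝ) + 1) ^ (m + 1) - (d : ℝ) ^ (m + 1)) / (m + 1)))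
      + (1 / (b : ℝ)) ^ (m + 1) *
      (∑ i ∈ Finset.range (m + 1), (m.choose i : ℝ) *
          (∑ a ∈ (Finset.range b).erase d, (a : ℝ) ^ (m - i)) * M b d 0 i) := by
  have h1 : ∀ a, D b d 0 (fun x => (((a : ℕ) + x) / b) ^ m) = _ :=
    D_shift_pow b d hdb 0 m
  have h3 : ∫ x in (0 : ℝ)..1, (((d : ℝ) + x) / b) ^ m
      = (1 / (b : ℝ)) ^ m * ((((d : ℝ) + 1) ^ (m + 1) - (d : ℝ) ^ (m + 1)) / (m + 1)) := by
    have e : (fun x : ℝ => (((d : ℝ) + x) / b) ^ m) = fun x => (1 / (b : ℝ)) ^ m * ((d : ℝ) + x) ^ m := by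
      ext x; rw [div_eq_mul_one_div, mul_pow, mul_comm]
    rw [e, intervalIntegral.integral_const_mul,
      intervalIntegral.integral_comp_add_left (fun x => x ^ m) (d : ℝ), integral_pow]
    simp
  conv_lhs => unfold M
  rw [Nat.cast_zero, D_rec_zero b d hdb (CU_pow m), h3, zero_pow hm, zero_sub,
    Finset.sum_congr rfl fun a _ => h1 a,
    ← Finset.mul_sum, ← mul_assoc, ← pow_succ', Finset.sum_comm]
  congr 2
  refine Finset.sum_congr rfl fun i _ => ?_
  rw [Finset.mul_sum, Finset.sum_mul]

lemma pow_diff (x y c : ℝ) (m : ℕ) (hx : |x| ≤ c) (hy : |y| ≤ c) :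
    |x ^ m - y ^ m| ≤ m * c ^ (m - 1) * |x - y| := by
  have h := abs_pow_sub_pow_le x y m
  have hm : max |x| |y| ^ (m - 1) ≤ c ^ (m - 1) := by
    gcongr
    exact max_le hx hy
  calc _ ≤ _ := h
    _ ≤ |x - y| * m * c ^ (m - 1) := by gcongr
    _ = _ := by ring

lemma LU_pow (m : ℕ) : LU (fun x => x ^ m) m := by
  intro x hx y hy
  have := pow_diff x y 1 m (by rw [abs_of_nonneg hx.1]; exact hx.2) (by rw [abs_of_nonneg hy.1]; exact hy.2)
  simpa using this

lemma LU_shift_pow (b d m : ℕ) :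
    LU (fun x => (((d : ℝ) + x) / b) ^ m) (m * (((d : ℝ) + 1) / b) ^ (m - 1) / b) := by
  intro x hx y hy
  have key : ∀ z ∈ Set.Icc (0 : ℝ) 1, |((d : ℝ) + z) / b| ≤ ((d : ℝ) + 1) / b := by
    intro z hz
    have := hz.1
    rw [abs_of_nonneg (by positivity)]
    gcongr; exact hz.2
  have := pow_diff _ _ _ m (key x hx) (key y hy)
  refine this.trans_eq ?_
  rw [← sub_div, abs_div, Nat.abs_cast, add_sub_add_left_eq_sub]; ring

/-- Higher moments are smaller by one more factor of `1/b`. -/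
lemma M_bound (d k m : ℕ) (hm : 2 ≤ m) : ∃ C : ℝ, ∀ b : ℕ, 1 < b → d < b →
    |M b d k m| ≤ C * (1 / (b : ℝ)) ^ (2 * k + 2) := by
  cases k with
  | zero =>
    refine ⟨((d : ℝ) + 1) ^ m + 2 * (d + 1) * m, fun b hb hdb => ?_⟩
    have hb' : (1 : ℝ) ≤ b := by exact_mod_cast hb.le
    unfold M
    rw [Nat.cast_zero, D_rec_zero b d hdb (CU_pow m), zero_pow (by omega), zero_sub]
    have h1 : |∫ x in (0 : ℝ)..1, (((d : ℝ) + x) / b) ^ m| ≤ ((d : ℝ) + 1) ^ m * (1 / (b : ℝ)) ^ 2 := by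
      have := intervalIntegral.norm_integral_le_of_norm_le_const (a := 0) (b := 1)
        (f := fun x : ℝ => (((d : ℝ) + x) / b) ^ m) (C := ((d : ℝ) + 1) ^ m * (1 / (b : ℝ)) ^ 2) ?_
      · simpa using this
      intro x hx
      rw [Set.uIoc_of_le zero_le_one] at hx
      have := hx.1
      rw [Real.norm_eq_abs, abs_of_nonneg (by positivity), div_eq_mul_one_div, mul_pow]
      have h3 : (1 / (b : ℝ)) ^ m ≤ (1 / (b : ℝ)) ^ 2 :=
        pow_le_pow_of_le_one (by positivity) (by rw [div_le_one (by linarith)]; exact hb') hm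
      gcongr
      exact hx.2
    have h2 := sum_erase_bound b d hdb (fun a => D b d 0 (fun x => (((a : ℝ) + x) / b) ^ m))
      (NN b d 0 * (m / b)) (fun a ha => by
        simpa using D_bound b d hb hdb 0 _ _ ((LU_pow m).comp_map (Finset.mem_range.1 (Finset.mem_of_mem_erase ha))))
    refine (abs_add_le _ _).trans ?_
    rw [abs_neg]
    refine (add_le_add h1 h2).trans ?_
    rw [mul_zero, zero_add, add_mul]
    refine add_le_add le_rfl ?_
    have h4 : ((b : ℝ) - 1) / b ≤ 1 := by rw [div_le_one (by linarith)]; linarith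
    calc ((b : ℝ) - 1) / b * (NN b d 0 * (m / b)) ≤ 1 * (NN b d 0 * (m / b)) := by
          have := NN_nonneg b d 0
          gcongr
      _ = _ := by simp only [NN]; field_simp; ring
  | succ k =>
    refine ⟨2 ^ (k + 1) * ((d : ℝ) + 1) * (m * (d + 1) ^ (m - 1)) + 2 ^ (k + 2) * (d + 1) * m, fun b hb hdb => ?_⟩
    have hb' : (1 : ℝ) ≤ b := by exact_mod_cast hb.le
    unfold M
    rw [D_rec b d hdb _ (by positivity) (CU_pow m), mul_add,
      show (((k + 1 : ℕ) : ℤ) - 1) = (k : ℤ) by push_cast; ring]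
    have h1 := D_bound b d hb hdb k _ _ (LU_shift_pow b d m)
    have h2 := sum_erase_bound b d hdb (fun a => D b d ((k + 1 : ℕ) : ℤ) (fun x => (((a : ℝ) + x) / b) ^ m))
      (NN b d (k + 1) * (m / b)) (fun a ha =>
        D_bound b d hb hdb (k + 1) _ _ ((LU_pow m).comp_map (Finset.mem_range.1 (Finset.mem_of_mem_erase ha))))
    refine (abs_add_le _ _).trans ?_
    rw [abs_mul, abs_of_nonneg (by positivity : (0 : ℝ) ≤ 1 / b)]
    refine (add_le_add (mul_le_mul_of_nonneg_left h1 (by positivity)) h2).trans ?_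
    rw [add_mul]
    refine add_le_add ?_ ?_
    · have e : 1 / (b : ℝ) * (NN b d k * (m * (((d : ℝ) + 1) / b) ^ (m - 1) / b))
          = 2 ^ (k + 1) * ((d : ℝ) + 1) * (m * (d + 1) ^ (m - 1)) * (1 / (b : ℝ)) ^ (2 * k + 3 + (m - 1)) := by
        simp only [NN, div_pow, one_pow]
        field_simp
        ring
      rw [e]
      refine mul_le_mul_of_nonneg_left ?_ (by positivity)
      exact pow_le_pow_of_le_one (by positivity) (by rw [div_le_one (by linarith)]; exact hb') (by omega)
    · have h4 : ((b : ℝ) - 1) / b ≤ 1 := by rw [div_le_one (by linarith)]; linarith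
      calc ((b : ℝ) - 1) / b * (NN b d (k + 1) * (m / b)) ≤ 1 * (NN b d (k + 1) * (m / b)) := by
            have := NN_nonneg b d (k + 1)
            gcongr
        _ = _ := by simp only [NN, div_pow, one_pow]; field_simp; ring

/-- `D` applied to `1/(A + x/b)`. -/
noncomputable def V (b d k : ℕ) (A : ℝ) : ℝ := D b d k (fun x => 1 / (A + x / b))

lemma geom_exp (A u : ℝ) (hA : A ≠ 0) (hu : A + u ≠ 0) (J : ℕ) :
    1 / (A + u) = ∑ j ∈ Finset.range J, (-1) ^ j * u ^ j / A ^ (j + 1)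
      + (-1) ^ J * u ^ J / (A ^ J * (A + u)) := by
  induction J with
  | zero => simp
  | succ J ih =>
    rw [ih, Finset.sum_range_succ, add_assoc]
    congr 1
    field_simp
    ring

lemma LU_rem (b : ℕ) (hb : 1 < b) (A : ℝ) (hA : 1 ≤ A) (J : ℕ) (hJ : 1 ≤ J) :
    LU (fun x => (x / b) ^ J / (A ^ J * (A + x / b))) ((J + 1) * (1 / (b : ℝ)) ^ J / A ^ 2) := by
  intro x hx y hy
  have hb' : (1 : ℝ) ≤ b := by exact_mod_cast hb.le
  have hA0 : 0 < A := by linarith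
  set h : ℝ := 1 / (b : ℝ) with hh
  have hh0 : 0 < h := by positivity
  have hh1 : h ≤ 1 := by rw [hh, div_le_one (by linarith)]; exact hb'
  have key : ∀ z ∈ Set.Icc (0 : ℝ) 1, 0 ≤ z / b ∧ z / b ≤ h := by
    intro z hz
    have := hz.1
    refine ⟨by positivity, ?_⟩
    rw [hh]; gcongr; exact hz.2
  obtain ⟨hu0, hu1⟩ := key x hx
  obtain ⟨hv0, hv1⟩ := key y hy
  have huv : |x / b - y / b| = h * |x - y| := by
    rw [← sub_div, abs_div, Nat.abs_cast, hh]; ring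
  show |(x / b) ^ J / (A ^ J * (A + x / b)) - (y / b) ^ J / (A ^ J * (A + y / b))| ≤ _
  set u := x / (b : ℝ)
  set v := y / (b : ℝ)
  have e : u ^ J / (A ^ J * (A + u)) - v ^ J / (A ^ J * (A + v))
      = (1 / A ^ J) * ((u ^ J - v ^ J) * (1 / (A + u)) + (v ^ J * (1 / (A + u)) * (1 / (A + v))) * (v - u)) := by
    field_simp
    ring
  have h1 := pow_diff u v h J (by rwa [abs_of_nonneg hu0]) (by rwa [abs_of_nonneg hv0])
  have hAu : 1 / (A + u) ≤ 1 / A := by gcongr; linarith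
  have hAu' : 0 ≤ 1 / (A + u) := by positivity
  have hAv : 1 / (A + v) ≤ 1 := by rw [div_le_one (by linarith)]; linarith
  have hAv' : 0 ≤ 1 / (A + v) := by positivity
  have hvJ : v ^ J ≤ h ^ (J - 1) := by
    calc v ^ J ≤ h ^ J := by gcongr
      _ ≤ h ^ (J - 1) := pow_le_pow_of_le_one hh0.le hh1 (by omega)
  have hAJ : 1 / A ^ J ≤ 1 / A := by
    gcongr
    calc A = A ^ 1 := by ring
      _ ≤ A ^ J := pow_le_pow_right₀ hA hJ
  rw [e, abs_mul, abs_of_nonneg (by positivity : 0 ≤ 1 / A ^ J)]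
  calc 1 / A ^ J * |(u ^ J - v ^ J) * (1 / (A + u)) + (v ^ J * (1 / (A + u)) * (1 / (A + v))) * (v - u)|
      ≤ 1 / A * ((J * h ^ (J - 1) * |u - v|) * (1 / A) + (h ^ (J - 1) * (1 / A) * 1) * |u - v|) := by
        refine mul_le_mul hAJ ?_ (abs_nonneg _) (by positivity)
        refine (abs_add_le _ _).trans (add_le_add ?_ ?_)
        · rw [abs_mul, abs_of_nonneg hAu']
          gcongr
        · rw [abs_mul, abs_of_nonneg (by positivity : 0 ≤ v ^ J * (1 / (A + u)) * (1 / (A + v))), abs_sub_comm v u]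
          gcongr
    _ = (J + 1) * (h * h ^ (J - 1)) / A ^ 2 * |x - y| := by
        rw [huv]; field_simp; try ring
    _ = _ := by rw [← pow_succ', Nat.sub_add_cancel hJ]

lemma V_exp (b d : ℕ) (hb : 1 < b) (hdb : d < b) (k : ℕ) (A : ℝ) (hA : 1 ≤ A) (J : ℕ) (hJ : 1 ≤ J) :
    |V b d k A - ∑ j ∈ Finset.range J, (-1) ^ j * M b d k j * (1 / (b : ℝ)) ^ j / A ^ (j + 1)|
      ≤ NN b d k * ((J + 1) * (1 / (b : ℝ)) ^ J / A ^ 2) := by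
  have hb' : (0 : ℝ) < b := by positivity
  have hA0 : 0 < A := by linarith
  have hR := LU_rem b hb A hA J hJ
  have h1 : V b d k A = D b d k (fun x => (∑ j ∈ Finset.range J, ((-1) ^ j * (1 / (b : ℝ)) ^ j / A ^ (j + 1)) * x ^ j)
      + (-1) ^ J * ((x / b) ^ J / (A ^ J * (A + x / b)))) := by
    refine D_congr _ _ _ fun x hx => ?_
    have := hx.1
    rw [geom_exp A (x / b) (by positivity) (by positivity) J, mul_div_assoc]
    congr 1
    refine Finset.sum_congr rfl fun j _ => ?_
    rw [div_eq_mul_one_div x, mul_pow]; ring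
  rw [h1, D_add b d hdb k (continuousOn_finsetSum _ fun j _ => Continuous.continuousOn (by fun_prop))
    (g := fun x => (-1) ^ J * ((x / b) ^ J / (A ^ J * (A + x / b)))) (continuousOn_const.mul hR.cu),
    D_sum b d hdb k _ _ (fun j _ => Continuous.continuousOn (by fun_prop)), D_smul b d k ((-1) ^ J)]
  have h2 : ∑ j ∈ Finset.range J, D b d k (fun x => ((-1) ^ j * (1 / (b : ℝ)) ^ j / A ^ (j + 1)) * x ^ j)
      = ∑ j ∈ Finset.range J, (-1) ^ j * M b d k j * (1 / (b : ℝ)) ^ j / A ^ (j + 1) := by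
    refine Finset.sum_congr rfl fun j _ => ?_
    rw [D_smul]; unfold M; ring
  rw [h2, add_sub_cancel_left, abs_mul, abs_pow, abs_neg, abs_one, one_pow, one_mul]
  exact D_bound b d hb hdb k _ _ hR

lemma irwin_dev_two (b d : ℕ) (hb : 1 < b) (hd : 1 ≤ d) (hdb : d < b) :
    irwinSum b d 2 - b * Real.log b
      = (1 / (b : ℝ)) * (V b d 0 (d + d / b) + ∑ c ∈ (Finset.range b).erase d, V b d 1 (d + c / b))
        + ∑ a ∈ (Finset.Ico 1 b).erase d, (1 / (b : ℝ)) * (V b d 1 (a + d / b)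
          + ∑ c ∈ (Finset.range b).erase d, V b d 2 (a + c / b)) := by
  rw [irwin_dev b d 2 hb hd hdb]
  have e : ∀ (A : ℝ) (c : ℕ), (fun x : ℝ => 1 / (A + ((c : ℝ) + x) / b)) = fun x => 1 / ((A + c / b) + x / b) := by
    intro A c; ext x; rw [add_div, add_assoc]
  congr 1
  · have := D_rec b d hdb 1 (by norm_num) (CU_inv d (by exact_mod_cast hd))
    simp only [e] at this
    simpa [V] using this
  · refine Finset.sum_congr rfl fun a ha => ?_
    have ha1 := (Finset.mem_Ico.1 (Finset.mem_of_mem_erase ha)).1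
    have := D_rec b d hdb 2 (by norm_num) (CU_inv a (by exact_mod_cast ha1))
    simp only [e] at this
    simpa [V] using this

end Irwin

namespace Irwin

/-- `f` has the expansion `c0 + c1 t + c2 t² + c3 t³ + c4 t⁴ + O(t⁵)` with `t = 1/b`. -/
def E (f : ℕ → ℝ) (c0 c1 c2 c3 c4 : ℝ) : Prop :=
  (fun b : ℕ => f b - (c0 + c1 * (1 / (b : ℝ)) + c2 * (1 / (b : ℝ)) ^ 2 + c3 * (1 / (b : ℝ)) ^ 3
    + c4 * (1 / (b : ℝ)) ^ 4)) =O[atTop] fun b : ℕ => (1 / (b : ℝ)) ^ 5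

lemma t_le (b : ℕ) : 0 ≤ 1 / (b : ℝ) ∧ 1 / (b : ℝ) ≤ 1 := by
  refine ⟨by positivity, ?_⟩
  rcases Nat.eq_zero_or_pos b with rfl | hb
  · simp
  · rw [div_le_one (by exact_mod_cast hb)]; exact_mod_cast hb

lemma t_bdd : (fun b : ℕ => 1 / (b : ℝ)) =O[atTop] fun _ : ℕ => (1 : ℝ) := by
  refine IsBigO.of_bound 1 (Eventually.of_forall fun b => ?_)
  have := t_le b
  rw [Real.norm_of_nonneg this.1]; simpa using this.2

lemma t_pow_le {m n : ℕ} (h : m ≤ n) :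
    (fun b : ℕ => (1 / (b : ℝ)) ^ n) =O[atTop] fun b : ℕ => (1 / (b : ℝ)) ^ m := by
  refine IsBigO.of_bound 1 (Eventually.of_forall fun b => ?_)
  have := t_le b
  rw [Real.norm_of_nonneg (by positivity), Real.norm_of_nonneg (by positivity), one_mul]
  exact pow_le_pow_of_le_one this.1 this.2 h

lemma const_bdd (c : ℝ) : (fun _ : ℕ => c) =O[atTop] fun _ : ℕ => (1 : ℝ) :=
  isBigO_const_const c one_ne_zero _

lemma bdd_mul {f g : ℕ → ℝ} (hf : f =O[atTop] fun _ : ℕ => (1 : ℝ))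
    (hg : g =O[atTop] fun _ : ℕ => (1 : ℝ)) :
    (fun b => f b * g b) =O[atTop] fun _ : ℕ => (1 : ℝ) := by
  simpa using hf.mul hg

lemma t_pow_bdd (n : ℕ) : (fun b : ℕ => (1 / (b : ℝ)) ^ n) =O[atTop] fun _ : ℕ => (1 : ℝ) := by
  simpa using t_pow_le (Nat.zero_le n)

lemma ct_bdd (c : ℝ) (n : ℕ) :
    (fun b : ℕ => c * (1 / (b : ℝ)) ^ n) =O[atTop] fun _ : ℕ => (1 : ℝ) :=
  bdd_mul (const_bdd c) (t_pow_bdd n)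

lemma poly_bdd (c0 c1 c2 c3 c4 : ℝ) : (fun b : ℕ => c0 + c1 * (1 / (b : ℝ)) + c2 * (1 / (b : ℝ)) ^ 2
    + c3 * (1 / (b : ℝ)) ^ 3 + c4 * (1 / (b : ℝ)) ^ 4) =O[atTop] fun _ : ℕ => (1 : ℝ) := by
  have := ct_bdd c1 1
  simp only [pow_one] at this
  exact ((((const_bdd c0).add this).add (ct_bdd c2 2)).add (ct_bdd c3 3)).add (ct_bdd c4 4)

lemma E.congr {f g : ℕ → ℝ} {c0 c1 c2 c3 c4 : ℝ} (h : E f c0 c1 c2 c3 c4)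
    (hfg : ∀ᶠ b in atTop, f b = g b) : E g c0 c1 c2 c3 c4 := by
  refine IsBigO.congr' h ?_ EventuallyEq.rfl
  filter_upwards [hfg] with b hb
  rw [hb]

lemma E.coef {f : ℕ → ℝ} {c0 c1 c2 c3 c4 e0 e1 e2 e3 e4 : ℝ} (h : E f c0 c1 c2 c3 c4)
    (h0 : c0 = e0) (h1 : c1 = e1) (h2 : c2 = e2) (h3 : c3 = e3) (h4 : c4 = e4) :
    E f e0 e1 e2 e3 e4 := by
  subst h0 h1 h2 h3 h4; exact h

lemma E.bdd {f : ℕ → ℝ} {c0 c1 c2 c3 c4 : ℝ} (h : E f c0 c1 c2 c3 c4) :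
    f =O[atTop] fun _ : ℕ => (1 : ℝ) := by
  have := (h.trans (t_pow_bdd 5)).add (poly_bdd c0 c1 c2 c3 c4)
  simpa using this

lemma E.add {f g : ℕ → ℝ} {a0 a1 a2 a3 a4 c0 c1 c2 c3 c4 : ℝ} (hf : E f a0 a1 a2 a3 a4)
    (hg : E g c0 c1 c2 c3 c4) :
    E (fun b => f b + g b) (a0 + c0) (a1 + c1) (a2 + c2) (a3 + c3) (a4 + c4) := by
  refine (IsBigO.add hf hg).congr_left fun b => ?_
  ring

lemma E.const_mul {f : ℕ → ℝ} {a0 a1 a2 a3 a4 : ℝ} (hf : E f a0 a1 a2 a3 a4) (c : ℝ) :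
    E (fun b => c * f b) (c * a0) (c * a1) (c * a2) (c * a3) (c * a4) := by
  refine (IsBigO.const_mul_left hf c).congr_left fun b => ?_
  ring

lemma E.sub {f g : ℕ → ℝ} {a0 a1 a2 a3 a4 c0 c1 c2 c3 c4 : ℝ} (hf : E f a0 a1 a2 a3 a4)
    (hg : E g c0 c1 c2 c3 c4) :
    E (fun b => f b - g b) (a0 - c0) (a1 - c1) (a2 - c2) (a3 - c3) (a4 - c4) := by
  refine (IsBigO.sub hf hg).congr_left fun b => ?_
  ring

lemma E.poly (c0 c1 c2 c3 c4 : ℝ) : E (fun b : ℕ => c0 + c1 * (1 / (b : ℝ)) + c2 * (1 / (b : ℝ)) ^ 2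
    + c3 * (1 / (b : ℝ)) ^ 3 + c4 * (1 / (b : ℝ)) ^ 4) c0 c1 c2 c3 c4 := by
  unfold E
  simp only [sub_self]
  exact isBigO_zero _ _

lemma E.of_big {f : ℕ → ℝ} (h : f =O[atTop] fun b : ℕ => (1 / (b : ℝ)) ^ 5) : E f 0 0 0 0 0 := by
  unfold E
  simpa using h

lemma E.of_bdd {f : ℕ → ℝ} (h : f =O[atTop] fun _ : ℕ => (1 : ℝ)) :
    E (fun b => (1 / (b : ℝ)) ^ 5 * f b) 0 0 0 0 0 := by
  refine E.of_big ?_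
  simpa only [mul_one] using (isBigO_refl (fun b : ℕ => (1 / (b : ℝ)) ^ 5) atTop).mul h

lemma E.mul {f g : ℕ → ℝ} {a0 a1 a2 a3 a4 c0 c1 c2 c3 c4 : ℝ} (hf : E f a0 a1 a2 a3 a4)
    (hg : E g c0 c1 c2 c3 c4) :
    E (fun b => f b * g b) (a0 * c0) (a0 * c1 + a1 * c0) (a0 * c2 + a1 * c1 + a2 * c0)
      (a0 * c3 + a1 * c2 + a2 * c1 + a3 * c0)
      (a0 * c4 + a1 * c3 + a2 * c2 + a3 * c1 + a4 * c0) := by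
  have h1 := IsBigO.mul hf hg.bdd
  have h2 := IsBigO.mul (poly_bdd a0 a1 a2 a3 a4) hg
  have h3 : (fun b : ℕ => (1 / (b : ℝ)) ^ 5 * ((a1 * c4 + a2 * c3 + a3 * c2 + a4 * c1)
      + (a2 * c4 + a3 * c3 + a4 * c2) * (1 / (b : ℝ)) + (a3 * c4 + a4 * c3) * (1 / (b : ℝ)) ^ 2
      + (a4 * c4) * (1 / (b : ℝ)) ^ 3 + 0 * (1 / (b : ℝ)) ^ 4)) =O[atTop]
        fun b : ℕ => (1 / (b : ℝ)) ^ 5 * 1 :=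
    (isBigO_refl _ _).mul (poly_bdd _ _ _ _ _)
  simp only [mul_one, one_mul] at h1 h2 h3
  refine ((h1.add h2).add h3).congr_left fun b => ?_
  ring

lemma E.shift {f : ℕ → ℝ} {a0 a1 a2 a3 a4 : ℝ} (hf : E f a0 a1 a2 a3 a4) :
    E (fun b => (1 / (b : ℝ)) * f b) 0 a0 a1 a2 a3 := by
  have h := (E.poly 0 1 0 0 0).mul hf
  refine (h.congr (Eventually.of_forall fun b => ?_)).coef ?_ ?_ ?_ ?_ ?_ <;> ring

lemma E.tends {f : ℕ → ℝ} {a0 a1 a2 a3 a4 : ℝ} (hf : E f a0 a1 a2 a3 a4) :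
    Tendsto f atTop (nhds a0) := by
  have ht : Tendsto (fun b : ℕ => 1 / (b : ℝ)) atTop (nhds 0) := tendsto_one_div_atTop_nhds_zero_nat
  have h5 : Tendsto (fun b : ℕ => (1 / (b : ℝ)) ^ 5) atTop (nhds 0) := by simpa using ht.pow 5
  have h1 := IsBigO.trans_tendsto hf h5
  have h2 : Tendsto (fun b : ℕ => a0 + a1 * (1 / (b : ℝ)) + a2 * (1 / (b : ℝ)) ^ 2
    + a3 * (1 / (b : ℝ)) ^ 3 + a4 * (1 / (b : ℝ)) ^ 4) atTop (nhds (a0 + a1 * 0 + a2 * 0 ^ 2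
    + a3 * 0 ^ 3 + a4 * 0 ^ 4)) :=
    ((((ht.const_mul a1).const_add a0).add ((ht.pow 2).const_mul a2)).add
      ((ht.pow 3).const_mul a3)).add ((ht.pow 4).const_mul a4)
  have := h1.add h2
  simpa using this

/-- Solving `g * f = h` for the expansion of `f`. -/
lemma E.solve {f g h : ℕ → ℝ} {g0 g1 g2 g3 g4 h0 h1 h2 h3 h4 : ℝ} (f0 f1 f2 f3 f4 : ℝ)
    (hg : E g g0 g1 g2 g3 g4) (hh : E h h0 h1 h2 h3 h4) (hg0 : g0 ≠ 0)
    (heq : ∀ᶠ b in atTop, g b * f b = h b)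
    (e0 : g0 * f0 = h0) (e1 : g0 * f1 + g1 * f0 = h1) (e2 : g0 * f2 + g1 * f1 + g2 * f0 = h2)
    (e3 : g0 * f3 + g1 * f2 + g2 * f1 + g3 * f0 = h3)
    (e4 : g0 * f4 + g1 * f3 + g2 * f2 + g3 * f1 + g4 * f0 = h4) :
    E f f0 f1 f2 f3 f4 := by
  have hP := hg.mul (E.poly f0 f1 f2 f3 f4)
  rw [e0, e1, e2, e3, e4] at hP
  have hd := hh.sub hP
  simp only [sub_self] at hd
  have hd' : (fun b : ℕ => h b - g b * (f0 + f1 * (1 / (b : ℝ)) + f2 * (1 / (b : ℝ)) ^ 2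
    + f3 * (1 / (b : ℝ)) ^ 3 + f4 * (1 / (b : ℝ)) ^ 4)) =O[atTop] fun b : ℕ => (1 / (b : ℝ)) ^ 5 := by
    have := hd
    unfold E at this
    simpa using this
  have hginv : (fun b => (g b)⁻¹) =O[atTop] fun _ : ℕ => (1 : ℝ) :=
    (hg.tends.inv₀ hg0).isBigO_one ℝ
  have hm := hginv.mul hd'
  simp only [one_mul] at hm
  refine IsBigO.congr' hm ?_ EventuallyEq.rfl
  filter_upwards [heq, hg.tends.eventually_ne hg0] with b hb hgb
  rw [← hb]
  field_simp

end Irwin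

namespace Irwin
set_option linter.unusedSimpArgs false

lemma psum (b d : ℕ) (hdb : d < b) (p : ℕ) :
    ∑ a ∈ (Finset.range b).erase d, (a : ℝ) ^ p = ∑ a ∈ Finset.range b, (a : ℝ) ^ p - (d : ℝ) ^ p := by
  rw [← Finset.add_sum_erase _ _ (Finset.mem_range.2 hdb)]; ring

lemma psum1 (b : ℕ) : ∑ a ∈ Finset.range b, (a : ℝ) ^ 1 = (b : ℝ) * (b - 1) / 2 := by
  induction b with
  | zero => simp
  | succ n ih => rw [Finset.sum_range_succ, ih]; push_cast; ring

lemma psum2 (b : ℕ) : ∑ a ∈ Finset.range b, (a : ℝ) ^ 2 = (b : ℝ) ^ 3 / 3 - b ^ 2 / 2 + b / 6 := by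
  induction b with
  | zero => simp
  | succ n ih => rw [Finset.sum_range_succ, ih]; push_cast; ring

lemma psum3 (b : ℕ) : ∑ a ∈ Finset.range b, (a : ℝ) ^ 3 = (b : ℝ) ^ 2 * (b - 1) ^ 2 / 4 := by
  induction b with
  | zero => simp
  | succ n ih => rw [Finset.sum_range_succ, ih]; push_cast; ring

lemma psum0 (b : ℕ) : ∑ a ∈ Finset.range b, (a : ℝ) ^ 0 = b := by simp

lemma eqP1 (b d : ℕ) (hdb : d < b) :
    (1 + (-1) * (1 / (b : ℝ)) + (1) * (1 / (b : ℝ)) ^ 2 + (0) * (1 / (b : ℝ)) ^ 3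
      + (0) * (1 / (b : ℝ)) ^ 4)
      * ((b : ℝ) * M b d 0 1) = (-((d : ℝ) + 1 / 2) + (0) * (1 / (b : ℝ)) + (0) * (1 / (b : ℝ)) ^ 2 + (0) * (1 / (b : ℝ)) ^ 3
      + (0) * (1 / (b : ℝ)) ^ 4) := by
  have hb : (b : ℝ) ≠ 0 := by exact_mod_cast (by omega : b ≠ 0)
  have h := M_rec_zero b d hdb 1 (by norm_num)
  simp only [Finset.sum_range_succ _ 0, Finset.sum_range_succ _ 1, Finset.sum_range_succ _ 2,
    Finset.sum_range_succ _ 3, Finset.sum_range_succ _ 4, Finset.sum_range_zero, psum b d hdb, M_zero b d hdb,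
    Nat.choose, Nat.sub_self, psum0, psum1, psum2, psum3, Nat.sub_zero, Nat.reduceSub, Nat.reduceAdd, mul_zero,
    zero_add, add_zero] at h
  push_cast at h
  field_simp at h ⊢
  linear_combination 1 * (b : ℝ) ^ 3 * h

lemma eqP2 (b d : ℕ) (hdb : d < b) :
    (1 + (0) * (1 / (b : ℝ)) + (-1) * (1 / (b : ℝ)) ^ 2 + (1) * (1 / (b : ℝ)) ^ 3
      + (0) * (1 / (b : ℝ)) ^ 4)
      * ((b : ℝ) ^ 2 * M b d 0 2) = (1 + (-1) * (1 / (b : ℝ)) + (-2 * (d : ℝ)) * (1 / (b : ℝ)) ^ 2 + (0) * (1 / (b : ℝ)) ^ 3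
      + (0) * (1 / (b : ℝ)) ^ 4) * ((b : ℝ) * M b d 0 1) + (-((((d : ℝ) + 1) ^ 3 - (d : ℝ) ^ 3) / 3) + (0) * (1 / (b : ℝ)) + (0) * (1 / (b : ℝ)) ^ 2 + (0) * (1 / (b : ℝ)) ^ 3
      + (0) * (1 / (b : ℝ)) ^ 4) := by
  have hb : (b : ℝ) ≠ 0 := by exact_mod_cast (by omega : b ≠ 0)
  have h := M_rec_zero b d hdb 2 (by norm_num)
  simp only [Finset.sum_range_succ _ 0, Finset.sum_range_succ _ 1, Finset.sum_range_succ _ 2,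
    Finset.sum_range_succ _ 3, Finset.sum_range_succ _ 4, Finset.sum_range_zero, psum b d hdb, M_zero b d hdb,
    Nat.choose, Nat.sub_self, psum0, psum1, psum2, psum3, Nat.sub_zero, Nat.reduceSub, Nat.reduceAdd, mul_zero,
    zero_add, add_zero] at h
  push_cast at h
  field_simp at h ⊢
  linear_combination 1 * (b : ℝ) ^ 3 * h

lemma eqP3 (b d : ℕ) (hdb : d < b) :
    (1 + (0) * (1 / (b : ℝ)) + (0) * (1 / (b : ℝ)) ^ 2 + (-1) * (1 / (b : ℝ)) ^ 3
      + (1) * (1 / (b : ℝ)) ^ 4)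
      * ((b : ℝ) ^ 2 * M b d 0 3) = (1 + (-3 / 2) * (1 / (b : ℝ)) + (1 / 2) * (1 / (b : ℝ)) ^ 2 + (-3 * (d : ℝ) ^ 2) * (1 / (b : ℝ)) ^ 3
      + (0) * (1 / (b : ℝ)) ^ 4) * ((b : ℝ) * M b d 0 1) + (0 + (0) * (1 / (b : ℝ)) + (3 / 2) * (1 / (b : ℝ)) ^ 2 + (-3 / 2) * (1 / (b : ℝ)) ^ 3
      + (-3 * (d : ℝ)) * (1 / (b : ℝ)) ^ 4) * ((b : ℝ) ^ 2 * M b d 0 2) + (0 + (-((((d : ℝ) + 1) ^ 4 - (d : ℝ) ^ 4) / 4)) * (1 / (b : ℝ)) + (0) * (1 / (b : ℝ)) ^ 2 + (0) * (1 / (b : ℝ)) ^ 3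
      + (0) * (1 / (b : ℝ)) ^ 4) := by
  have hb : (b : ℝ) ≠ 0 := by exact_mod_cast (by omega : b ≠ 0)
  have h := M_rec_zero b d hdb 3 (by norm_num)
  simp only [Finset.sum_range_succ _ 0, Finset.sum_range_succ _ 1, Finset.sum_range_succ _ 2,
    Finset.sum_range_succ _ 3, Finset.sum_range_succ _ 4, Finset.sum_range_zero, psum b d hdb, M_zero b d hdb,
    Nat.choose, Nat.sub_self, psum0, psum1, psum2, psum3, Nat.sub_zero, Nat.reduceSub, Nat.reduceAdd, mul_zero,
    zero_add, add_zero] at h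
  push_cast at h
  field_simp at h ⊢
  linear_combination (1 / 6) * (b : ℝ) ^ 2 * h

lemma eqP4 (b d : ℕ) (hdb : d < b) :
    (1 + (0) * (1 / (b : ℝ)) + (0) * (1 / (b : ℝ)) ^ 2 + (0) * (1 / (b : ℝ)) ^ 3
      + (-1) * (1 / (b : ℝ)) ^ 4)
      * ((b : ℝ) ^ 2 * M b d 0 4) = (1 + (-2) * (1 / (b : ℝ)) + (1) * (1 / (b : ℝ)) ^ 2 + (0) * (1 / (b : ℝ)) ^ 3
      + (-4 * (d : ℝ) ^ 3) * (1 / (b : ℝ)) ^ 4) * ((b : ℝ) * M b d 0 1) + (0 + (0) * (1 / (b : ℝ)) + (2) * (1 / (b : ℝ)) ^ 2 + (-3) * (1 / (b : ℝ)) ^ 3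
      + (1) * (1 / (b : ℝ)) ^ 4) * ((b : ℝ) ^ 2 * M b d 0 2) + (0 + (0) * (1 / (b : ℝ)) + (0) * (1 / (b : ℝ)) ^ 2 + (2) * (1 / (b : ℝ)) ^ 3
      + (-2) * (1 / (b : ℝ)) ^ 4) * ((b : ℝ) ^ 2 * M b d 0 3) + (0 + (0) * (1 / (b : ℝ)) + (-((((d : ℝ) + 1) ^ 5 - (d : ℝ) ^ 5) / 5)) * (1 / (b : ℝ)) ^ 2 + (0) * (1 / (b : ℝ)) ^ 3
      + (0) * (1 / (b : ℝ)) ^ 4)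
      + (1 / (b : ℝ)) ^ 5 * ((-1) * ((b : ℝ) ^ 2 * M b d 0 4) + (-6 * (d : ℝ) ^ 2) * ((b : ℝ) ^ 2 * M b d 0 2) + (-4 * (d : ℝ)) * ((b : ℝ) ^ 2 * M b d 0 3)) := by
  have hb : (b : ℝ) ≠ 0 := by exact_mod_cast (by omega : b ≠ 0)
  have h := M_rec_zero b d hdb 4 (by norm_num)
  simp only [Finset.sum_range_succ _ 0, Finset.sum_range_succ _ 1, Finset.sum_range_succ _ 2,
    Finset.sum_range_succ _ 3, Finset.sum_range_succ _ 4, Finset.sum_range_zero, psum b d hdb, M_zero b d hdb,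
    Nat.choose, Nat.sub_self, psum0, psum1, psum2, psum3, Nat.sub_zero, Nat.reduceSub, Nat.reduceAdd, mul_zero,
    zero_add, add_zero] at h
  push_cast at h
  field_simp at h ⊢
  linear_combination (1 / 6) * (b : ℝ) ^ 1 * h

lemma eqQ1 (b d : ℕ) (hdb : d < b) :
    (1 + (-1) * (1 / (b : ℝ)) + (1) * (1 / (b : ℝ)) ^ 2 + (0) * (1 / (b : ℝ)) ^ 3
      + (0) * (1 / (b : ℝ)) ^ 4)
      * ((b : ℝ) ^ 3 * M b d 1 1) = (1 + (0) * (1 / (b : ℝ)) + (0) * (1 / (b : ℝ)) ^ 2 + (0) * (1 / (b : ℝ)) ^ 3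
      + (0) * (1 / (b : ℝ)) ^ 4) * ((b : ℝ) * M b d 0 1) := by
  have hb : (b : ℝ) ≠ 0 := by exact_mod_cast (by omega : b ≠ 0)
  have h := M_rec b d hdb 0 1
  simp only [Finset.sum_range_succ _ 0, Finset.sum_range_succ _ 1, Finset.sum_range_succ _ 2,
    Finset.sum_range_succ _ 3, Finset.sum_range_succ _ 4, Finset.sum_range_zero, psum b d hdb, M_zero b d hdb,
    Nat.choose, Nat.sub_self, psum0, psum1, psum2, psum3, Nat.sub_zero, Nat.reduceSub, Nat.reduceAdd, mul_zero,
    zero_add, add_zero] at h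
  push_cast at h
  field_simp at h ⊢
  linear_combination 1 * (b : ℝ) ^ 4 * h

lemma eqR1 (b d : ℕ) (hdb : d < b) :
    (1 + (-1) * (1 / (b : ℝ)) + (1) * (1 / (b : ℝ)) ^ 2 + (0) * (1 / (b : ℝ)) ^ 3
      + (0) * (1 / (b : ℝ)) ^ 4)
      * ((b : ℝ) ^ 5 * M b d 2 1) = (1 + (0) * (1 / (b : ℝ)) + (0) * (1 / (b : ℝ)) ^ 2 + (0) * (1 / (b : ℝ)) ^ 3
      + (0) * (1 / (b : ℝ)) ^ 4) * ((b : ℝ) ^ 3 * M b d 1 1) := by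
  have hb : (b : ℝ) ≠ 0 := by exact_mod_cast (by omega : b ≠ 0)
  have h := M_rec b d hdb 1 1
  simp only [Finset.sum_range_succ _ 0, Finset.sum_range_succ _ 1, Finset.sum_range_succ _ 2,
    Finset.sum_range_succ _ 3, Finset.sum_range_succ _ 4, Finset.sum_range_zero, psum b d hdb, M_zero b d hdb,
    Nat.choose, Nat.sub_self, psum0, psum1, psum2, psum3, Nat.sub_zero, Nat.reduceSub, Nat.reduceAdd, mul_zero,
    zero_add, add_zero] at h
  push_cast at h
  field_simp at h ⊢
  linear_combination 1 * (b : ℝ) ^ 4 * h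

lemma eqQ2 (b d : ℕ) (hdb : d < b) :
    (1 + (0) * (1 / (b : ℝ)) + (-1) * (1 / (b : ℝ)) ^ 2 + (1) * (1 / (b : ℝ)) ^ 3
      + (0) * (1 / (b : ℝ)) ^ 4)
      * ((b : ℝ) ^ 4 * M b d 1 2) = (1 + (-1) * (1 / (b : ℝ)) + (-2 * (d : ℝ)) * (1 / (b : ℝ)) ^ 2 + (0) * (1 / (b : ℝ)) ^ 3
      + (0) * (1 / (b : ℝ)) ^ 4) * ((b : ℝ) ^ 3 * M b d 1 1) + (2 * (d : ℝ) + (0) * (1 / (b : ℝ)) + (0) * (1 / (b : ℝ)) ^ 2 + (0) * (1 / (b : ℝ)) ^ 3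
      + (0) * (1 / (b : ℝ)) ^ 4) * ((b : ℝ) * M b d 0 1) + (0 + (1) * (1 / (b : ℝ)) + (0) * (1 / (b : ℝ)) ^ 2 + (0) * (1 / (b : ℝ)) ^ 3
      + (0) * (1 / (b : ℝ)) ^ 4) * ((b : ℝ) ^ 2 * M b d 0 2) := by
  have hb : (b : ℝ) ≠ 0 := by exact_mod_cast (by omega : b ≠ 0)
  have h := M_rec b d hdb 0 2
  simp only [Finset.sum_range_succ _ 0, Finset.sum_range_succ _ 1, Finset.sum_range_succ _ 2,
    Finset.sum_range_succ _ 3, Finset.sum_range_succ _ 4, Finset.sum_range_zero, psum b d hdb, M_zero b d hdb,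
    Nat.choose, Nat.sub_self, psum0, psum1, psum2, psum3, Nat.sub_zero, Nat.reduceSub, Nat.reduceAdd, mul_zero,
    zero_add, add_zero] at h
  push_cast at h
  field_simp at h ⊢
  linear_combination 1 * (b : ℝ) ^ 4 * h

lemma eqQ3 (b d : ℕ) (hdb : d < b) :
    (1 + (0) * (1 / (b : ℝ)) + (0) * (1 / (b : ℝ)) ^ 2 + (-1) * (1 / (b : ℝ)) ^ 3
      + (1) * (1 / (b : ℝ)) ^ 4)
      * ((b : ℝ) ^ 4 * M b d 1 3) = (1 + (-3 / 2) * (1 / (b : ℝ)) + (1 / 2) * (1 / (b : ℝ)) ^ 2 + (-3 * (d : ℝ) ^ 2) * (1 / (b : ℝ)) ^ 3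
      + (0) * (1 / (b : ℝ)) ^ 4) * ((b : ℝ) ^ 3 * M b d 1 1) + (0 + (0) * (1 / (b : ℝ)) + (3 / 2) * (1 / (b : ℝ)) ^ 2 + (-3 / 2) * (1 / (b : ℝ)) ^ 3
      + (-3 * (d : ℝ)) * (1 / (b : ℝ)) ^ 4) * ((b : ℝ) ^ 4 * M b d 1 2) + (0 + (3 * (d : ℝ) ^ 2) * (1 / (b : ℝ)) + (0) * (1 / (b : ℝ)) ^ 2 + (0) * (1 / (b : ℝ)) ^ 3
      + (0) * (1 / (b : ℝ)) ^ 4) * ((b : ℝ) * M b d 0 1) + (0 + (0) * (1 / (b : ℝ)) + (3 * (d : ℝ)) * (1 / (b : ℝ)) ^ 2 + (0) * (1 / (b : ℝ)) ^ 3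
      + (0) * (1 / (b : ℝ)) ^ 4) * ((b : ℝ) ^ 2 * M b d 0 2) + (0 + (0) * (1 / (b : ℝ)) + (1) * (1 / (b : ℝ)) ^ 2 + (0) * (1 / (b : ℝ)) ^ 3
      + (0) * (1 / (b : ℝ)) ^ 4) * ((b : ℝ) ^ 2 * M b d 0 3) := by
  have hb : (b : ℝ) ≠ 0 := by exact_mod_cast (by omega : b ≠ 0)
  have h := M_rec b d hdb 0 3
  simp only [Finset.sum_range_succ _ 0, Finset.sum_range_succ _ 1, Finset.sum_range_succ _ 2,
    Finset.sum_range_succ _ 3, Finset.sum_range_succ _ 4, Finset.sum_range_zero, psum b d hdb, M_zero b d hdb,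
    Nat.choose, Nat.sub_self, psum0, psum1, psum2, psum3, Nat.sub_zero, Nat.reduceSub, Nat.reduceAdd, mul_zero,
    zero_add, add_zero] at h
  push_cast at h
  field_simp at h ⊢
  linear_combination (1 / 6) * (b : ℝ) ^ 3 * h

lemma EP1 (d : ℕ) : E (fun b : ℕ => ((b : ℝ) * M b d 0 1))
    ((-1) * (d : ℝ) ^ 1 + (-1 / 2))
    ((-1) * (d : ℝ) ^ 1 + (-1 / 2))
    0
    ((1) * (d : ℝ) ^ 1 + (1 / 2))
    ((1) * (d : ℝ) ^ 1 + (1 / 2)) := by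
  refine E.solve _ _ _ _ _ (E.poly (1) (-1) (1) (0) (0))
    (E.poly (-((d : ℝ) + 1 / 2)) (0) (0) (0) (0)) one_ne_zero ?_ ?_ ?_ ?_ ?_ ?_
  · filter_upwards [eventually_gt_atTop d] with b hb
    exact eqP1 b d hb
  all_goals ring

lemma EP2 (d : ℕ) : E (fun b : ℕ => ((b : ℝ) ^ 2 * M b d 0 2))
    ((-1) * (d : ℝ) ^ 2 + (-2) * (d : ℝ) ^ 1 + (-5 / 6))
    0
    ((1) * (d : ℝ) ^ 2 + (-1 / 3))
    ((3) * (d : ℝ) ^ 2 + (4) * (d : ℝ) ^ 1 + (4 / 3))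
    ((1) * (d : ℝ) ^ 2 + (-1 / 3)) := by
  refine E.solve _ _ _ _ _ (E.poly (1) (0) (-1) (1) (0))
    (((E.poly (1) (-1) (-2 * (d : ℝ)) (0) (0)).mul (EP1 d)).add (E.poly (-((((d : ℝ) + 1) ^ 3 - (d : ℝ) ^ 3) / 3)) (0) (0) (0) (0))) one_ne_zero ?_ ?_ ?_ ?_ ?_ ?_
  · filter_upwards [eventually_gt_atTop d] with b hb
    exact eqP2 b d hb
  all_goals ring

lemma EP3 (d : ℕ) : E (fun b : ℕ => ((b : ℝ) ^ 2 * M b d 0 3))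
    ((-1) * (d : ℝ) ^ 1 + (-1 / 2))
    ((-1) * (d : ℝ) ^ 3 + (-3 / 2) * (d : ℝ) ^ 2 + (-1 / 2) * (d : ℝ) ^ 1)
    ((-3 / 2) * (d : ℝ) ^ 2 + (-2) * (d : ℝ) ^ 1 + (-3 / 4))
    ((3) * (d : ℝ) ^ 3 + (3) * (d : ℝ) ^ 2 + (5 / 2) * (d : ℝ) ^ 1 + (1))
    ((5) * (d : ℝ) ^ 3 + (15 / 2) * (d : ℝ) ^ 2 + (5 / 2) * (d : ℝ) ^ 1 + (-1 / 4)) := by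
  refine E.solve _ _ _ _ _ (E.poly (1) (0) (0) (-1) (1))
    ((((E.poly (1) (-3 / 2) (1 / 2) (-3 * (d : ℝ) ^ 2) (0)).mul (EP1 d)).add ((E.poly (0) (0) (3 / 2) (-3 / 2) (-3 * (d : ℝ))).mul (EP2 d))).add (E.poly (0) (-((((d : ℝ) + 1) ^ 4 - (d : ℝ) ^ 4) / 4)) (0) (0) (0))) one_ne_zero ?_ ?_ ?_ ?_ ?_ ?_
  · filter_upwards [eventually_gt_atTop d] with b hb
    exact eqP3 b d hb
  all_goals ring

lemma EP4 (d : ℕ) : E (fun b : ℕ => ((b : ℝ) ^ 2 * M b d 0 4))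
    ((-1) * (d : ℝ) ^ 1 + (-1 / 2))
    ((1) * (d : ℝ) ^ 1 + (1 / 2))
    ((-1) * (d : ℝ) ^ 4 + (-2) * (d : ℝ) ^ 3 + (-4) * (d : ℝ) ^ 2 + (-4) * (d : ℝ) ^ 1 + (-41 / 30))
    ((3) * (d : ℝ) ^ 2 + (4) * (d : ℝ) ^ 1 + (3 / 2))
    ((4) * (d : ℝ) ^ 4 + (-2) * (d : ℝ) ^ 2 + (-3) * (d : ℝ) ^ 1 + (-3 / 2)) := by
  have hbd : (fun b : ℕ => ((b : ℝ) ^ 2 * M b d 0 4)) =O[atTop] fun _ : ℕ => (1 : ℝ) := by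
    obtain ⟨C, hC⟩ := M_bound d 0 4 (by norm_num)
    refine IsBigO.of_bound C ?_
    filter_upwards [eventually_gt_atTop 1, eventually_gt_atTop d] with b hb hdb
    have := hC b hb hdb
    have hb0 : (0 : ℝ) < b := by positivity
    rw [norm_one, mul_one, Real.norm_eq_abs, abs_mul, abs_of_nonneg (by positivity)]
    calc (b : ℝ) ^ 2 * |M b d 0 4| ≤ (b : ℝ) ^ 2 * (C * (1 / (b : ℝ)) ^ (2 * 0 + 2)) := by gcongr
      _ = C := by simp only [mul_zero, zero_add]; field_simp
  refine E.solve _ _ _ _ _ (E.poly (1) (0) (0) (0) (-1))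
    ((((((E.poly (1) (-2) (1) (0) (-4 * (d : ℝ) ^ 3)).mul (EP1 d)).add ((E.poly (0) (0) (2) (-3) (1)).mul (EP2 d))).add ((E.poly (0) (0) (0) (2) (-2)).mul (EP3 d))).add (E.poly (0) (0) (-((((d : ℝ) + 1) ^ 5 - (d : ℝ) ^ 5) / 5)) (0) (0))).add (E.of_bdd (((hbd.const_mul_left (-1)).add ((EP2 d).bdd.const_mul_left (-6 * (d : ℝ) ^ 2))).add ((EP3 d).bdd.const_mul_left (-4 * (d : ℝ)))))) one_ne_zero ?_ ?_ ?_ ?_ ?_ ?_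
  · filter_upwards [eventually_gt_atTop d] with b hb
    exact eqP4 b d hb
  all_goals ring

lemma EQ1 (d : ℕ) : E (fun b : ℕ => ((b : ℝ) ^ 3 * M b d 1 1))
    ((-1) * (d : ℝ) ^ 1 + (-1 / 2))
    ((-2) * (d : ℝ) ^ 1 + (-1))
    ((-1) * (d : ℝ) ^ 1 + (-1 / 2))
    ((2) * (d : ℝ) ^ 1 + (1))
    ((4) * (d : ℝ) ^ 1 + (2)) := by
  refine E.solve _ _ _ _ _ (E.poly (1) (-1) (1) (0) (0))
    ((E.poly (1) (0) (0) (0) (0)).mul (EP1 d)) one_ne_zero ?_ ?_ ?_ ?_ ?_ ?_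
  · filter_upwards [eventually_gt_atTop d] with b hb
    exact eqQ1 b d hb
  all_goals ring

lemma ER1 (d : ℕ) : E (fun b : ℕ => ((b : ℝ) ^ 5 * M b d 2 1))
    ((-1) * (d : ℝ) ^ 1 + (-1 / 2))
    ((-3) * (d : ℝ) ^ 1 + (-3 / 2))
    ((-3) * (d : ℝ) ^ 1 + (-3 / 2))
    ((2) * (d : ℝ) ^ 1 + (1))
    ((9) * (d : ℝ) ^ 1 + (9 / 2)) := by
  refine E.solve _ _ _ _ _ (E.poly (1) (-1) (1) (0) (0))
    ((E.poly (1) (0) (0) (0) (0)).mul (EQ1 d)) one_ne_zero ?_ ?_ ?_ ?_ ?_ ?_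
  · filter_upwards [eventually_gt_atTop d] with b hb
    exact eqR1 b d hb
  all_goals ring

lemma EQ2 (d : ℕ) : E (fun b : ℕ => ((b : ℝ) ^ 4 * M b d 1 2))
    ((-2) * (d : ℝ) ^ 2 + (-2) * (d : ℝ) ^ 1 + (-1 / 2))
    ((-3) * (d : ℝ) ^ 2 + (-4) * (d : ℝ) ^ 1 + (-4 / 3))
    0
    ((6) * (d : ℝ) ^ 2 + (4) * (d : ℝ) ^ 1 + (1 / 3))
    ((10) * (d : ℝ) ^ 2 + (12) * (d : ℝ) ^ 1 + (11 / 3)) := by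
  refine E.solve _ _ _ _ _ (E.poly (1) (0) (-1) (1) (0))
    ((((E.poly (1) (-1) (-2 * (d : ℝ)) (0) (0)).mul (EQ1 d)).add ((E.poly (2 * (d : ℝ)) (0) (0) (0) (0)).mul (EP1 d))).add ((E.poly (0) (1) (0) (0) (0)).mul (EP2 d))) one_ne_zero ?_ ?_ ?_ ?_ ?_ ?_
  · filter_upwards [eventually_gt_atTop d] with b hb
    exact eqQ2 b d hb
  all_goals ring

lemma EQ3 (d : ℕ) : E (fun b : ℕ => ((b : ℝ) ^ 4 * M b d 1 3))
    ((-1) * (d : ℝ) ^ 1 + (-1 / 2))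
    ((-3) * (d : ℝ) ^ 3 + (-3 / 2) * (d : ℝ) ^ 2 + (-1 / 2) * (d : ℝ) ^ 1 + (-1 / 4))
    ((-6) * (d : ℝ) ^ 3 + (-21 / 2) * (d : ℝ) ^ 2 + (-5) * (d : ℝ) ^ 1 + (-1 / 2))
    ((2) * (d : ℝ) ^ 3 + (-3 / 2) * (d : ℝ) ^ 2 + (-2) * (d : ℝ) ^ 1 + (-1 / 2))
    ((15) * (d : ℝ) ^ 3 + (12) * (d : ℝ) ^ 2 + (11 / 2) * (d : ℝ) ^ 1 + (7 / 4)) := by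
  refine E.solve _ _ _ _ _ (E.poly (1) (0) (0) (-1) (1))
    ((((((E.poly (1) (-3 / 2) (1 / 2) (-3 * (d : ℝ) ^ 2) (0)).mul (EQ1 d)).add ((E.poly (0) (0) (3 / 2) (-3 / 2) (-3 * (d : ℝ))).mul (EQ2 d))).add ((E.poly (0) (3 * (d : ℝ) ^ 2) (0) (0) (0)).mul (EP1 d))).add ((E.poly (0) (0) (3 * (d : ℝ)) (0) (0)).mul (EP2 d))).add ((E.poly (0) (0) (1) (0) (0)).mul (EP3 d))) one_ne_zero ?_ ?_ ?_ ?_ ?_ ?_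
  · filter_upwards [eventually_gt_atTop d] with b hb
    exact eqQ3 b d hb
  all_goals ring

end Irwin

namespace Irwin

lemma E.mk {f : ℕ → ℝ} {c0 c1 c2 c3 c4 : ℝ} (C : ℝ)
    (h : ∀ᶠ b : ℕ in atTop, |f b - (c0 + c1 * (1 / (b : ℝ)) + c2 * (1 / (b : ℝ)) ^ 2
      + c3 * (1 / (b : ℝ)) ^ 3 + c4 * (1 / (b : ℝ)) ^ 4)| ≤ C * (1 / (b : ℝ)) ^ 5) :
    E f c0 c1 c2 c3 c4 := by
  refine IsBigO.of_bound C ?_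
  filter_upwards [h] with b hb
  rw [Real.norm_eq_abs, Real.norm_of_nonneg (by positivity)]
  exact hb

/-- Uniform truncated expansion of sums of `V`. -/
lemma sumV (d k J : ℕ) (hJ : 2 ≤ J) : ∃ C : ℝ, 0 ≤ C ∧ ∀ b : ℕ, 1 < b → d < b →
    ∀ (ι : Type) (s : Finset ι) (A : ι → ℝ), (∀ i ∈ s, 1 ≤ A i) →
    |∑ i ∈ s, V b d k (A i)
      - ∑ j ∈ Finset.range J, (-1) ^ j * M b d k j * (1 / (b : ℝ)) ^ j * ∑ i ∈ s, 1 / A i ^ (j + 1)|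
      ≤ C * (1 / (b : ℝ)) ^ (J + 2 * k + 2) * ∑ i ∈ s, 1 / A i ^ 2 := by
  obtain ⟨C, hC⟩ := M_bound d k J hJ
  refine ⟨|C| + 2 ^ (k + 1) * (d + 1) * (J + 2), by positivity, ?_⟩
  intro b hb hdb ι s A hA
  have hb0 : (0 : ℝ) < b := by positivity
  have hM : |M b d k J| ≤ |C| * (1 / (b : ℝ)) ^ (2 * k + 2) :=
    (hC b hb hdb).trans (by gcongr; exact le_abs_self C)
  rw [Finset.mul_sum]
  simp_rw [Finset.mul_sum]
  rw [Finset.sum_comm, ← Finset.sum_sub_distrib]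
  refine (Finset.abs_sum_le_sum_abs _ _).trans (Finset.sum_le_sum fun i hi => ?_)
  have h1 := V_exp b d hb hdb k (A i) (hA i hi) (J + 1) (by omega)
  have hAi := hA i hi
  have hA0 : 0 < A i := by linarith
  rw [Finset.sum_range_succ] at h1
  have e1 : ∑ j ∈ Finset.range J, (-1) ^ j * M b d k j * (1 / (b : ℝ)) ^ j * (1 / A i ^ (j + 1))
      = ∑ j ∈ Finset.range J, (-1) ^ j * M b d k j * (1 / (b : ℝ)) ^ j / A i ^ (j + 1) :=
    Finset.sum_congr rfl fun j _ => by ring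
  rw [e1]
  have h2 : |(-1) ^ J * M b d k J * (1 / (b : ℝ)) ^ J / A i ^ (J + 1)|
      ≤ |C| * (1 / (b : ℝ)) ^ (J + 2 * k + 2) * (1 / A i ^ 2) := by
    rw [abs_div, abs_mul, abs_mul, abs_pow, abs_neg, abs_one, one_pow, one_mul,
      abs_of_nonneg (show 0 ≤ (1 / (b : ℝ)) ^ J by positivity),
      abs_of_pos (show 0 < A i ^ (J + 1) by positivity), div_eq_mul_one_div]
    have h3 : 1 / A i ^ (J + 1) ≤ 1 / A i ^ 2 :=
      one_div_le_one_div_of_le (by positivity) (pow_le_pow_right₀ hAi (by omega))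
    calc _ ≤ (|C| * (1 / (b : ℝ)) ^ (2 * k + 2)) * (1 / (b : ℝ)) ^ J * (1 / A i ^ 2) := by gcongr
      _ = _ := by ring
  have h4 : NN b d k * (((J + 1 : ℕ) + 1) * (1 / (b : ℝ)) ^ (J + 1) / A i ^ 2)
      = 2 ^ (k + 1) * (d + 1) * (J + 2) * (1 / (b : ℝ)) ^ (J + 2 * k + 2) * (1 / A i ^ 2) := by
    unfold NN
    push_cast
    rw [show J + 2 * k + 2 = (2 * k + 1) + (J + 1) by ring, pow_add (1 / (b : ℝ)) (2 * k + 1),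
      one_div_pow (b : ℝ) (2 * k + 1)]
    ring
  rw [h4] at h1
  calc _ = |(V b d k (A i) - (∑ j ∈ Finset.range J, (-1) ^ j * M b d k j * (1 / (b : ℝ)) ^ j / A i ^ (j + 1)
      + (-1) ^ J * M b d k J * (1 / (b : ℝ)) ^ J / A i ^ (J + 1)))
      + (-1) ^ J * M b d k J * (1 / (b : ℝ)) ^ J / A i ^ (J + 1)| := by congr 1; ring
    _ ≤ _ := abs_add_le _ _
    _ ≤ _ := add_le_add h1 h2
    _ = _ := by ring

lemma tele (b : ℕ) (hb : 0 < b) (a : ℝ) (f φ : ℝ → ℝ) (K : ℝ)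
    (h : ∀ y, a ≤ y → |(1 / (b : ℝ)) * f y - (φ y - φ (y + 1 / (b : ℝ)))| ≤ K) :
    |∑ c ∈ Finset.range b, (1 / (b : ℝ)) * f (a + c / b) - (φ a - φ (a + 1))| ≤ b * K := by
  have hb0 : (0 : ℝ) < b := by exact_mod_cast hb
  have e : φ a - φ (a + 1) = ∑ c ∈ Finset.range b, (φ (a + c / b) - φ (a + c / b + 1 / (b : ℝ))) := by
    have := Finset.sum_range_sub' (fun c : ℕ => φ (a + c / b)) b
    simp only [Nat.cast_zero, zero_div, add_zero] at this
    rw [div_self hb0.ne'] at this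
    rw [← this]
    refine Finset.sum_congr rfl fun c _ => ?_
    congr 2
    push_cast
    ring
  rw [e, ← Finset.sum_sub_distrib]
  calc _ ≤ _ := Finset.abs_sum_le_sum_abs _ _
    _ ≤ ∑ c ∈ Finset.range b, K := Finset.sum_le_sum fun c _ => h _ (by
        have : (0 : ℝ) ≤ c / b := by positivity
        linarith)
    _ = b * K := by simp

/-- `(1/b) ∑_{c<b} 1/(a+c/b)^p`. -/
noncomputable def row (b : ℕ) (a : ℝ) (p : ℕ) : ℝ :=
  ∑ c ∈ Finset.range b, (1 / (b : ℝ)) * (1 / (a + c / b) ^ p)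

lemma row2 (b : ℕ) (hb : 0 < b) (a : ℝ) (ha : 1 ≤ a) :
    |row b a 2 - ((1 / a - 1 / (a + 1)) + (1 / a ^ 2 - 1 / (a + 1) ^ 2) / 2 * (1 / (b : ℝ))
      + (1 / a ^ 3 - 1 / (a + 1) ^ 3) / 6 * (1 / (b : ℝ)) ^ 2)| ≤ (1 / (b : ℝ)) ^ 4 * (1 / a ^ 2) := by
  have hb0 : (0 : ℝ) < b := by exact_mod_cast hb
  have ht : 0 < 1 / (b : ℝ) := by positivity
  have h := tele b hb a (fun y => 1 / y ^ 2)
    (fun y => 1 / y + (1 / (b : ℝ)) / 2 * (1 / y ^ 2) + (1 / (b : ℝ)) ^ 2 / 6 * (1 / y ^ 3))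
    ((1 / (b : ℝ)) ^ 5 * (1 / a ^ 2)) (by
      intro y hy
      have hy0 : 0 < y := by linarith
      generalize 1 / (b : ℝ) = t at ht ⊢
      have e : t * (1 / y ^ 2) - (1 / y + t / 2 * (1 / y ^ 2) + t ^ 2 / 6 * (1 / y ^ 3)
        - (1 / (y + t) + t / 2 * (1 / (y + t) ^ 2) + t ^ 2 / 6 * (1 / (y + t) ^ 3)))
        = -(t ^ 5 * (1 / (6 * y ^ 3 * (y + t) ^ 3))) := by
        have : y + t ≠ 0 := by positivity
        field_simp
        ring
      simp only [e]
      rw [abs_neg, abs_of_nonneg (by positivity)]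
      have : a ^ 2 ≤ 6 * y ^ 3 * (y + t) ^ 3 := by
        have h1 : a ^ 2 ≤ y ^ 2 := by gcongr
        have h2 : y ^ 2 ≤ y ^ 3 := pow_le_pow_right₀ (by linarith) (by norm_num)
        have h3 : 1 ≤ (y + t) ^ 3 := one_le_pow₀ (by linarith)
        have h4 : 0 ≤ y ^ 3 := by positivity
        nlinarith
      gcongr)
  unfold row
  have e2 : (b : ℝ) * ((1 / (b : ℝ)) ^ 5 * (1 / a ^ 2)) = (1 / (b : ℝ)) ^ 4 * (1 / a ^ 2) := by
    field_simp
  rw [e2] at h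
  refine le_trans (le_of_eq ?_) h
  congr 1
  ring

lemma row3 (b : ℕ) (hb : 0 < b) (a : ℝ) (ha : 1 ≤ a) :
    |row b a 3 - ((1 / a ^ 2 - 1 / (a + 1) ^ 2) / 2 + (1 / a ^ 3 - 1 / (a + 1) ^ 3) / 2 * (1 / (b : ℝ)))|
      ≤ 3 * (1 / (b : ℝ)) ^ 2 := by
  have hb0 : (0 : ℝ) < b := by exact_mod_cast hb
  have ht : 0 < 1 / (b : ℝ) := by positivity
  have h := tele b hb a (fun y => 1 / y ^ 3)
    (fun y => (1 / 2) * (1 / y ^ 2) + (1 / (b : ℝ)) / 2 * (1 / y ^ 3))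
    (3 * (1 / (b : ℝ)) ^ 3) (by
      intro y hy
      have hy0 : 0 < y := by linarith
      generalize 1 / (b : ℝ) = t at ht ⊢
      have e : t * (1 / y ^ 3) - ((1 / 2) * (1 / y ^ 2) + t / 2 * (1 / y ^ 3)
        - ((1 / 2) * (1 / (y + t) ^ 2) + t / 2 * (1 / (y + t) ^ 3)))
        = t ^ 3 * ((2 * y + t) / (2 * y ^ 3 * (y + t) ^ 3)) := by
        have : y + t ≠ 0 := by positivity
        field_simp
        ring
      simp only [e]
      rw [abs_of_nonneg (by positivity), mul_comm 3]
      gcongr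
      rw [div_le_iff₀ (by positivity)]
      have h2 : 1 ≤ y ^ 3 := one_le_pow₀ (by linarith)
      have h3 : y + t ≤ (y + t) ^ 3 := le_self_pow₀ (by linarith) (by norm_num)
      nlinarith)
  unfold row
  have e2 : (b : ℝ) * (3 * (1 / (b : ℝ)) ^ 3) = 3 * (1 / (b : ℝ)) ^ 2 := by
    field_simp
  rw [e2] at h
  refine le_trans (le_of_eq ?_) h
  congr 1
  ring

lemma row4 (b : ℕ) (hb : 0 < b) (a : ℝ) (ha : 1 ≤ a) :
    |row b a 4 - (1 / a ^ 3 - 1 / (a + 1) ^ 3) / 3| ≤ 6 * (1 / (b : ℝ)) := by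
  have hb0 : (0 : ℝ) < b := by exact_mod_cast hb
  have ht : 0 < 1 / (b : ℝ) := by positivity
  have h := tele b hb a (fun y => 1 / y ^ 4)
    (fun y => (1 / 3) * (1 / y ^ 3))
    (6 * (1 / (b : ℝ)) ^ 2) (by
      intro y hy
      have hy0 : 0 < y := by linarith
      generalize 1 / (b : ℝ) = t at ht ⊢
      have e : t * (1 / y ^ 4) - ((1 / 3) * (1 / y ^ 3) - ((1 / 3) * (1 / (y + t) ^ 3)))
        = t ^ 2 * ((6 * y ^ 2 + 8 * y * t + 3 * t ^ 2) / (3 * y ^ 4 * (y + t) ^ 3)) := by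
        have : y + t ≠ 0 := by positivity
        field_simp
        ring
      simp only [e]
      rw [abs_of_nonneg (by positivity), mul_comm 6 (t ^ 2)]
      gcongr
      rw [div_le_iff₀ (by positivity)]
      have h2 : 1 ≤ y ^ 4 := one_le_pow₀ (by linarith)
      have h3 : (y + t) ^ 2 ≤ (y + t) ^ 3 := pow_le_pow_right₀ (by linarith) (by norm_num)
      have h4 : (y + t) ^ 3 ≤ y ^ 4 * (y + t) ^ 3 := le_mul_of_one_le_left (by positivity) h2
      nlinarith [mul_pos hy0 ht, sq_nonneg y, sq_nonneg t])
  unfold row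
  have e2 : (b : ℝ) * (6 * (1 / (b : ℝ)) ^ 2) = 6 * (1 / (b : ℝ)) := by
    field_simp
  rw [e2] at h
  refine le_trans (le_of_eq ?_) h
  congr 1
  ring

lemma ES2 (d : ℕ) (hd : 1 ≤ d) : E (fun b : ℕ => (1 / (b : ℝ)) * row b d 2) 0
    (1 / (d : ℝ) - 1 / ((d : ℝ) + 1)) ((1 / (d : ℝ) ^ 2 - 1 / ((d : ℝ) + 1) ^ 2) / 2)
    ((1 / (d : ℝ) ^ 3 - 1 / ((d : ℝ) + 1) ^ 3) / 6) 0 := by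
  refine E.mk 1 ?_
  filter_upwards [eventually_gt_atTop 0] with b hb
  have hd1 : (1 : ℝ) ≤ d := by exact_mod_cast hd
  have h := row2 b hb d hd1
  have h2 : 1 / (d : ℝ) ^ 2 ≤ 1 := by
    rw [div_le_one (by positivity)]; exact one_le_pow₀ hd1
  calc _ = |(1 / (b : ℝ)) * (row b d 2 - ((1 / (d : ℝ) - 1 / ((d : ℝ) + 1)) + (1 / (d : ℝ) ^ 2 - 1 / ((d : ℝ) + 1) ^ 2) / 2 * (1 / (b : ℝ))
      + (1 / (d : ℝ) ^ 3 - 1 / ((d : ℝ) + 1) ^ 3) / 6 * (1 / (b : ℝ)) ^ 2))| := by congr 1; ring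
    _ = (1 / (b : ℝ)) * _ := by rw [abs_mul, abs_of_nonneg (by positivity)]
    _ ≤ (1 / (b : ℝ)) * ((1 / (b : ℝ)) ^ 4 * 1) := by gcongr; exact h.trans (by gcongr)
    _ = _ := by ring

lemma ES3 (d : ℕ) (hd : 1 ≤ d) : E (fun b : ℕ => (1 / (b : ℝ)) ^ 3 * row b d 3) 0 0 0
    ((1 / (d : ℝ) ^ 2 - 1 / ((d : ℝ) + 1) ^ 2) / 2)
    ((1 / (d : ℝ) ^ 3 - 1 / ((d : ℝ) + 1) ^ 3) / 2) := by
  refine E.mk 3 ?_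
  filter_upwards [eventually_gt_atTop 0] with b hb
  have hd1 : (1 : ℝ) ≤ d := by exact_mod_cast hd
  have h := row3 b hb d hd1
  calc _ = |(1 / (b : ℝ)) ^ 3 * (row b d 3 - ((1 / (d : ℝ) ^ 2 - 1 / ((d : ℝ) + 1) ^ 2) / 2
      + (1 / (d : ℝ) ^ 3 - 1 / ((d : ℝ) + 1) ^ 3) / 2 * (1 / (b : ℝ))))| := by congr 1; ring
    _ = (1 / (b : ℝ)) ^ 3 * _ := by rw [abs_mul, abs_of_nonneg (by positivity)]
    _ ≤ (1 / (b : ℝ)) ^ 3 * (3 * (1 / (b : ℝ)) ^ 2) := by gcongr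
    _ = _ := by ring

lemma ES4 (d : ℕ) (hd : 1 ≤ d) : E (fun b : ℕ => (1 / (b : ℝ)) ^ 4 * row b d 4) 0 0 0 0
    ((1 / (d : ℝ) ^ 3 - 1 / ((d : ℝ) + 1) ^ 3) / 3) := by
  refine E.mk 6 ?_
  filter_upwards [eventually_gt_atTop 0] with b hb
  have hd1 : (1 : ℝ) ≤ d := by exact_mod_cast hd
  have h := row4 b hb d hd1
  calc _ = |(1 / (b : ℝ)) ^ 4 * (row b d 4 - (1 / (d : ℝ) ^ 3 - 1 / ((d : ℝ) + 1) ^ 3) / 3)| := by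
        congr 1; ring
    _ = (1 / (b : ℝ)) ^ 4 * _ := by rw [abs_mul, abs_of_nonneg (by positivity)]
    _ ≤ (1 / (b : ℝ)) ^ 4 * (6 * (1 / (b : ℝ))) := by gcongr
    _ = _ := by ring

/-- Tails of zeta. -/
noncomputable def ztail (p b : ℕ) : ℝ := zetaR p - ∑ a ∈ Finset.Ico 1 b, 1 / (a : ℝ) ^ p

lemma ztail_step (p b : ℕ) (hb : 1 ≤ b) : ztail p b - ztail p (b + 1) = 1 / (b : ℝ) ^ p := by
  unfold ztail
  rw [Finset.sum_Ico_succ_top hb]; ring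

lemma ztail_tendsto (p : ℕ) (hp : 2 ≤ p) : Tendsto (ztail p) atTop (nhds 0) := by
  have hs : Summable (fun n : ℕ => 1 / ((n : ℝ) + 1) ^ p) := by
    have := (Real.summable_one_div_nat_pow (p := p)).2 (by omega)
    have h2 := (summable_nat_add_iff 1).2 this
    simpa using h2
  have h := hs.hasSum.tendsto_sum_nat
  rw [← tendsto_add_atTop_iff_nat 1]
  have h2 : Tendsto (fun n : ℕ => zetaR p - ∑ i ∈ Finset.range n, 1 / ((i : ℝ) + 1) ^ p) atTop (nhds (zetaR p - zetaR p)) :=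
    h.const_sub _
  rw [sub_self] at h2
  refine h2.congr fun n => ?_
  unfold ztail
  rw [Finset.sum_Ico_eq_sum_range]
  congr 1
  simp only [Nat.add_sub_cancel]
  refine Finset.sum_congr rfl fun i _ => ?_
  push_cast
  rw [add_comm]

lemma tail_le (r φ : ℕ → ℝ) (hr : Tendsto r atTop (nhds 0)) (hφ : Tendsto φ atTop (nhds 0))
    (h : ∀ n, 1 ≤ n → r n - r (n + 1) ≤ φ n - φ (n + 1)) (n : ℕ) (hn : 1 ≤ n) : r n ≤ φ n := by
  have hm : ∀ k : ℕ, r n - φ n ≤ r (n + k) - φ (n + k) := by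
    intro k
    induction k with
    | zero => simp
    | succ k ih =>
      have := h (n + k) (by omega)
      rw [← add_assoc]
      linarith
  have ht : Tendsto (fun k => r (n + k) - φ (n + k)) atTop (nhds (0 - 0)) := by
    have := (hr.sub hφ).comp (tendsto_add_atTop_nat n)
    refine this.congr fun k => ?_
    simp [add_comm]
  have := ge_of_tendsto' ht hm
  linarith

lemma tinv (p : ℕ) (hp : p ≠ 0) (c : ℝ) : Tendsto (fun n : ℕ => c * (1 / (n : ℝ)) ^ p) atTop (nhds 0) := by
  have := ((tendsto_one_div_atTop_nhds_zero_nat (𝕜 := ℝ)).pow p).const_mul c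
  simpa [hp] using this

lemma ztail2_ge (b : ℕ) (hb : 1 ≤ b) : (1 / (b : ℝ)) + (1 / 2) * (1 / (b : ℝ)) ^ 2 ≤ ztail 2 b := by
  refine tail_le (fun b : ℕ => (1 / (b : ℝ)) + (1 / 2) * (1 / (b : ℝ)) ^ 2) (ztail 2) ?_
    (ztail_tendsto 2 le_rfl) ?_ b hb
  · simpa using (tinv 1 one_ne_zero 1).add (tinv 2 two_ne_zero (1 / 2))
  · intro n hn
    have hn0 : (0 : ℝ) < n := by positivity
    rw [ztail_step 2 n hn]
    push_cast
    have : 1 / (n : ℝ) ^ 2 - (1 / (n : ℝ) + 1 / 2 * (1 / (n : ℝ)) ^ 2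
      - (1 / ((n : ℝ) + 1) + 1 / 2 * (1 / ((n : ℝ) + 1)) ^ 2)) = 1 / (2 * n ^ 2 * (n + 1) ^ 2) := by
      field_simp
      ring
    have h2 : 0 ≤ 1 / (2 * (n : ℝ) ^ 2 * (n + 1) ^ 2) := by positivity
    linarith

lemma ztail2_le (b : ℕ) (hb : 1 ≤ b) :
    ztail 2 b ≤ (1 / (b : ℝ)) + (1 / 2) * (1 / (b : ℝ)) ^ 2 + (1 / 6) * (1 / (b : ℝ)) ^ 3 := by
  refine tail_le (ztail 2)
    (fun b : ℕ => (1 / (b : ℝ)) + (1 / 2) * (1 / (b : ℝ)) ^ 2 + (1 / 6) * (1 / (b : ℝ)) ^ 3)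
    (ztail_tendsto 2 le_rfl) ?_ ?_ b hb
  · simpa using ((tinv 1 one_ne_zero 1).add (tinv 2 two_ne_zero (1 / 2))).add (tinv 3 three_ne_zero (1 / 6))
  · intro n hn
    have hn0 : (0 : ℝ) < n := by positivity
    rw [ztail_step 2 n hn]
    push_cast
    have : 1 / (n : ℝ) ^ 2 - (1 / (n : ℝ) + 1 / 2 * (1 / (n : ℝ)) ^ 2 + (1 / 6) * (1 / (n : ℝ)) ^ 3
      - (1 / ((n : ℝ) + 1) + 1 / 2 * (1 / ((n : ℝ) + 1)) ^ 2 + 1 / 6 * (1 / ((n : ℝ) + 1)) ^ 3))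
        = -(1 / (6 * n ^ 3 * (n + 1) ^ 3)) := by
      field_simp
      ring
    have h2 : 0 ≤ 1 / (6 * (n : ℝ) ^ 3 * (n + 1) ^ 3) := by positivity
    linarith

lemma ztail_nonneg (p : ℕ) (hp : 2 ≤ p) (b : ℕ) (hb : 1 ≤ b) : 0 ≤ ztail p b := by
  refine tail_le (fun _ => 0) (ztail p) tendsto_const_nhds (ztail_tendsto p hp) ?_ b hb
  intro n hn
  rw [ztail_step p n hn]
  simp only [sub_self]
  positivity

lemma ztail_le (p : ℕ) (hp : 3 ≤ p) (b : ℕ) (hb : 1 ≤ b) : ztail p b ≤ 2 * (1 / (b : ℝ)) ^ 2 := by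
  refine tail_le (ztail p) (fun b : ℕ => 2 * (1 / (b : ℝ)) ^ 2) (ztail_tendsto p (by omega))
    (tinv 2 two_ne_zero 2) ?_ b hb
  intro n hn
  have hn0 : (0 : ℝ) < n := by positivity
  have hn1 : (1 : ℝ) ≤ n := by exact_mod_cast hn
  rw [ztail_step p n hn]
  push_cast
  have h1 : 1 / (n : ℝ) ^ p ≤ 1 / (n : ℝ) ^ 3 :=
    one_div_le_one_div_of_le (by positivity) (pow_le_pow_right₀ hn1 hp)
  refine h1.trans ?_
  have : 2 * (1 / (n : ℝ)) ^ 2 - 2 * (1 / ((n : ℝ) + 1)) ^ 2 - 1 / (n : ℝ) ^ 3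
      = (3 * n ^ 2 - 1) / (n ^ 3 * (n + 1) ^ 2) := by
    field_simp
    ring
  have h2 : 0 ≤ (3 * (n : ℝ) ^ 2 - 1) / (n ^ 3 * (n + 1) ^ 2) := by
    apply div_nonneg _ (by positivity)
    nlinarith
  linarith

lemma sum_sq_le (b : ℕ) : ∑ a ∈ Finset.Ico 1 b, 1 / (a : ℝ) ^ 2 ≤ 2 := by
  rcases Nat.eq_zero_or_pos b with rfl | hb
  · simp
  have h1 := ztail2_le 1 le_rfl
  have h2 := ztail_nonneg 2 le_rfl b hb
  unfold ztail at h1 h2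
  norm_num at h1 h2 ⊢
  linarith

end Irwin

namespace Irwin

lemma E.near {f g : ℕ → ℝ} {c0 c1 c2 c3 c4 : ℝ} (hg : E g c0 c1 c2 c3 c4) (C : ℝ)
    (h : ∀ᶠ b : ℕ in atTop, |f b - g b| ≤ C * (1 / (b : ℝ)) ^ 5) : E f c0 c1 c2 c3 c4 := by
  have h1 : E (fun b => f b - g b) 0 0 0 0 0 := by
    refine E.mk C ?_
    filter_upwards [h] with b hb
    simpa using hb
  refine ((h1.add hg).congr (Eventually.of_forall fun b => ?_)).coef ?_ ?_ ?_ ?_ ?_ <;> ring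

lemma Ex (d : ℕ) (hd : 1 ≤ d) : E (fun b : ℕ => 1 / ((d : ℝ) + d / b))
    (1 / (d : ℝ)) (-(1 / (d : ℝ))) (1 / (d : ℝ)) (-(1 / (d : ℝ))) (1 / (d : ℝ)) := by
  have hd0 : (d : ℝ) ≠ 0 := by positivity
  refine E.solve _ _ _ _ _ (E.poly (d : ℝ) d 0 0 0) (E.poly 1 0 0 0 0) hd0 ?_ ?_ ?_ ?_ ?_ ?_
  · filter_upwards [eventually_gt_atTop 0] with b hb
    have hb0 : (0 : ℝ) < b := by positivity
    have : (d : ℝ) + d / b ≠ 0 := by positivity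
    field_simp
    ring
  all_goals field_simp; try ring

/-- `∑_{1 ≤ a < b} 1/(a+d/b)^p`. -/
noncomputable def Tf (b d p : ℕ) : ℝ := ∑ a ∈ Finset.Ico 1 b, 1 / ((a : ℝ) + d / b) ^ p

lemma term2 (a u : ℝ) (ha : 1 ≤ a) (hu : 0 ≤ u) :
    |1 / (a + u) ^ 2 - (1 / a ^ 2 - 2 * u * (1 / a ^ 3) + 3 * u ^ 2 * (1 / a ^ 4))|
      ≤ 4 * u ^ 3 * (1 / a ^ 2) := by
  have ha0 : 0 < a := by linarith
  have e : 1 / (a + u) ^ 2 - (1 / a ^ 2 - 2 * u * (1 / a ^ 3) + 3 * u ^ 2 * (1 / a ^ 4))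
      = -(u ^ 3 * ((4 * a + 3 * u) / (a ^ 4 * (a + u) ^ 2))) := by
    have : a + u ≠ 0 := by positivity
    field_simp
    ring
  rw [e, abs_neg, abs_of_nonneg (by positivity)]
  have h : (4 * a + 3 * u) / (a ^ 4 * (a + u) ^ 2) ≤ 4 * (1 / a ^ 2) := by
    rw [div_le_iff₀ (by positivity)]
    have e2 : 4 * (1 / a ^ 2) * (a ^ 4 * (a + u) ^ 2) = 4 * (a ^ 2 * (a + u) ^ 2) := by
      field_simp
    rw [e2]
    have h1 : 1 ≤ a ^ 2 := one_le_pow₀ ha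
    have h2 : a + u ≤ (a + u) ^ 2 := le_self_pow₀ (by linarith) (by norm_num)
    have h3 : (a + u) ^ 2 ≤ a ^ 2 * (a + u) ^ 2 := le_mul_of_one_le_left (by positivity) h1
    linarith
  calc _ ≤ u ^ 3 * (4 * (1 / a ^ 2)) := by gcongr
    _ = _ := by ring

lemma term3 (a u : ℝ) (ha : 1 ≤ a) (hu : 0 ≤ u) :
    |1 / (a + u) ^ 3 - 1 / a ^ 3| ≤ 3 * u * (1 / a ^ 2) := by
  have ha0 : 0 < a := by linarith
  have e : 1 / (a + u) ^ 3 - 1 / a ^ 3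
      = -(u * ((3 * a ^ 2 + 3 * a * u + u ^ 2) / (a ^ 3 * (a + u) ^ 3))) := by
    have : a + u ≠ 0 := by positivity
    field_simp
    ring
  rw [e, abs_neg, abs_of_nonneg (by positivity)]
  have h : (3 * a ^ 2 + 3 * a * u + u ^ 2) / (a ^ 3 * (a + u) ^ 3) ≤ 3 * (1 / a ^ 2) := by
    rw [div_le_iff₀ (by positivity)]
    have e2 : 3 * (1 / a ^ 2) * (a ^ 3 * (a + u) ^ 3) = 3 * (a * (a + u) ^ 3) := by
      field_simp
    rw [e2]
    have h2 : (a + u) ^ 2 ≤ (a + u) ^ 3 := pow_le_pow_right₀ (by linarith) (by norm_num)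
    have h3 : (a + u) ^ 3 ≤ a * (a + u) ^ 3 := le_mul_of_one_le_left (by positivity) ha
    nlinarith [mul_nonneg ha0.le hu, sq_nonneg u]
  calc _ ≤ u * (3 * (1 / a ^ 2)) := by gcongr
    _ = _ := by ring

lemma Tf2 (b d : ℕ) : |Tf b d 2 - (∑ a ∈ Finset.Ico 1 b, 1 / (a : ℝ) ^ 2
      - 2 * (d / b) * ∑ a ∈ Finset.Ico 1 b, 1 / (a : ℝ) ^ 3
      + 3 * (d / b) ^ 2 * ∑ a ∈ Finset.Ico 1 b, 1 / (a : ℝ) ^ 4)| ≤ 8 * ((d : ℝ) / b) ^ 3 := by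
  have hu : (0 : ℝ) ≤ d / b := by positivity
  unfold Tf
  rw [Finset.mul_sum, Finset.mul_sum, ← Finset.sum_sub_distrib, ← Finset.sum_add_distrib,
    ← Finset.sum_sub_distrib]
  calc _ ≤ _ := Finset.abs_sum_le_sum_abs _ _
    _ ≤ ∑ a ∈ Finset.Ico 1 b, 4 * ((d : ℝ) / b) ^ 3 * (1 / (a : ℝ) ^ 2) :=
        Finset.sum_le_sum fun a ha => term2 a _ (by exact_mod_cast (Finset.mem_Ico.1 ha).1) hu
    _ = 4 * ((d : ℝ) / b) ^ 3 * ∑ a ∈ Finset.Ico 1 b, 1 / (a : ℝ) ^ 2 := by rw [Finset.mul_sum]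
    _ ≤ 4 * ((d : ℝ) / b) ^ 3 * 2 := by gcongr; exact sum_sq_le b
    _ = _ := by ring

lemma Tf3 (b d : ℕ) : |Tf b d 3 - ∑ a ∈ Finset.Ico 1 b, 1 / (a : ℝ) ^ 3| ≤ 6 * ((d : ℝ) / b) := by
  have hu : (0 : ℝ) ≤ d / b := by positivity
  unfold Tf
  rw [← Finset.sum_sub_distrib]
  calc _ ≤ _ := Finset.abs_sum_le_sum_abs _ _
    _ ≤ ∑ a ∈ Finset.Ico 1 b, 3 * ((d : ℝ) / b) * (1 / (a : ℝ) ^ 2) :=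
        Finset.sum_le_sum fun a ha => term3 a _ (by exact_mod_cast (Finset.mem_Ico.1 ha).1) hu
    _ = 3 * ((d : ℝ) / b) * ∑ a ∈ Finset.Ico 1 b, 1 / (a : ℝ) ^ 2 := by rw [Finset.mul_sum]
    _ ≤ 3 * ((d : ℝ) / b) * 2 := by gcongr; exact sum_sq_le b
    _ = _ := by ring

lemma ET2 (d : ℕ) : E (fun b : ℕ => (1 / (b : ℝ)) ^ 2 * Tf b d 2) 0 0 (zetaR 2)
    (-1 - 2 * d * zetaR 3) (-(1 / 2) + 3 * (d : ℝ) ^ 2 * zetaR 4) := by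
  refine E.mk (8 * (d : ℝ) ^ 3 + 1 + 4 * d + 6 * (d : ℝ) ^ 2) ?_
  filter_upwards [eventually_gt_atTop 0] with b hb
  have h := Tf2 b d
  have l2 := ztail2_ge b hb
  have u2 := ztail2_le b hb
  have l3 := ztail_nonneg 3 (by norm_num) b hb
  have u3 := ztail_le 3 (by norm_num) b hb
  have l4 := ztail_nonneg 4 (by norm_num) b hb
  have u4 := ztail_le 4 (by norm_num) b hb
  have ht := t_le b
  have e2 : ∑ a ∈ Finset.Ico 1 b, 1 / (a : ℝ) ^ 2 = zetaR 2 - ztail 2 b := by unfold ztail; ring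
  have e3 : ∑ a ∈ Finset.Ico 1 b, 1 / (a : ℝ) ^ 3 = zetaR 3 - ztail 3 b := by unfold ztail; ring
  have e4 : ∑ a ∈ Finset.Ico 1 b, 1 / (a : ℝ) ^ 4 = zetaR 4 - ztail 4 b := by unfold ztail; ring
  rw [e2, e3, e4, div_eq_mul_one_div (d : ℝ)] at h
  generalize 1 / (b : ℝ) = t at *
  obtain ⟨t0, t1⟩ := ht
  generalize ztail 2 b = z2 at *
  generalize ztail 3 b = z3 at *
  generalize ztail 4 b = z4 at *
  have hd0 : (0 : ℝ) ≤ d := by positivity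
  generalize (d : ℝ) = D at *
  have a1 : |z2 - t - (1 / 2) * t ^ 2| ≤ t ^ 3 := by
    rw [abs_le]
    have : 0 ≤ t ^ 3 := by positivity
    constructor <;> linarith
  have a2 : |2 * D * t * z3| ≤ 4 * D * t ^ 3 := by
    rw [abs_of_nonneg (by positivity)]
    calc _ ≤ 2 * D * t * (2 * t ^ 2) := by gcongr
      _ = _ := by ring
  have a3 : |3 * D ^ 2 * t ^ 2 * z4| ≤ 6 * D ^ 2 * t ^ 3 := by
    rw [abs_of_nonneg (by positivity)]
    calc _ ≤ 3 * D ^ 2 * t ^ 2 * (2 * t ^ 2) := by gcongr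
      _ = 6 * D ^ 2 * t ^ 3 * t := by ring
      _ ≤ 6 * D ^ 2 * t ^ 3 * 1 := by gcongr
      _ = _ := by ring
  have key : |Tf b d 2 - (zetaR 2 + (-1 - 2 * D * zetaR 3) * t + (-(1 / 2) + 3 * D ^ 2 * zetaR 4) * t ^ 2)|
      ≤ (8 * D ^ 3 + 1 + 4 * D + 6 * D ^ 2) * t ^ 3 := by
    rw [abs_le] at *
    constructor <;> nlinarith
  calc _ = |t ^ 2 * (Tf b d 2 - (zetaR 2 + (-1 - 2 * D * zetaR 3) * t
        + (-(1 / 2) + 3 * D ^ 2 * zetaR 4) * t ^ 2))| := by congr 1; ring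
    _ = t ^ 2 * _ := by rw [abs_mul, abs_of_nonneg (by positivity)]
    _ ≤ t ^ 2 * ((8 * D ^ 3 + 1 + 4 * D + 6 * D ^ 2) * t ^ 3) := by gcongr
    _ = _ := by ring

lemma ET3 (d : ℕ) : E (fun b : ℕ => (1 / (b : ℝ)) ^ 4 * Tf b d 3) 0 0 0 0 (zetaR 3) := by
  refine E.mk (6 * (d : ℝ) + 2) ?_
  filter_upwards [eventually_gt_atTop 0] with b hb
  have h := Tf3 b d
  have l3 := ztail_nonneg 3 (by norm_num) b hb
  have u3 := ztail_le 3 (by norm_num) b hb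
  have ht := t_le b
  have e3 : ∑ a ∈ Finset.Ico 1 b, 1 / (a : ℝ) ^ 3 = zetaR 3 - ztail 3 b := by unfold ztail; ring
  rw [e3, div_eq_mul_one_div (d : ℝ)] at h
  generalize 1 / (b : ℝ) = t at *
  obtain ⟨t0, t1⟩ := ht
  have key : |Tf b d 3 - zetaR 3| ≤ (6 * (d : ℝ) + 2) * t := by
    rw [abs_le] at *
    constructor <;> nlinarith
  calc _ = |t ^ 4 * (Tf b d 3 - zetaR 3)| := by congr 1; ring
    _ = t ^ 4 * _ := by rw [abs_mul, abs_of_nonneg (by positivity)]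
    _ ≤ t ^ 4 * ((6 * (d : ℝ) + 2) * t) := by gcongr
    _ = _ := by ring

lemma tsum_Ico (b p : ℕ) (hb : 1 ≤ b) :
    ∑ a ∈ Finset.Ico 1 b, (1 / (a : ℝ) ^ p - 1 / ((a : ℝ) + 1) ^ p) = 1 - (1 / (b : ℝ)) ^ p := by
  induction b, hb using Nat.le_induction with
  | base => simp
  | succ n hn ih =>
    rw [Finset.sum_Ico_succ_top hn, ih]
    push_cast
    rw [one_div_pow, one_div_pow]
    ring

lemma EQf : E (fun b : ℕ => (1 / (b : ℝ)) ^ 3 * ∑ a ∈ Finset.Ico 1 b, row b a 2) 0 0 0 1 (-(1 / 2)) := by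
  refine E.mk 3 ?_
  filter_upwards [eventually_gt_atTop 0] with b hb
  have h : |∑ a ∈ Finset.Ico 1 b, row b a 2 - ((1 - (1 / (b : ℝ)) ^ 1)
      + (1 - (1 / (b : ℝ)) ^ 2) / 2 * (1 / (b : ℝ)) + (1 - (1 / (b : ℝ)) ^ 3) / 6 * (1 / (b : ℝ)) ^ 2)|
      ≤ 2 * (1 / (b : ℝ)) ^ 4 := by
    rw [← tsum_Ico b 1 hb, ← tsum_Ico b 2 hb, ← tsum_Ico b 3 hb, Finset.sum_div, Finset.sum_div,
      Finset.sum_mul, Finset.sum_mul, ← Finset.sum_add_distrib, ← Finset.sum_add_distrib,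
      ← Finset.sum_sub_distrib]
    calc _ ≤ _ := Finset.abs_sum_le_sum_abs _ _
      _ ≤ ∑ a ∈ Finset.Ico 1 b, (1 / (b : ℝ)) ^ 4 * (1 / (a : ℝ) ^ 2) :=
          Finset.sum_le_sum fun a ha => by
            simp only [pow_one]
            exact row2 b hb a (by exact_mod_cast (Finset.mem_Ico.1 ha).1)
      _ = (1 / (b : ℝ)) ^ 4 * ∑ a ∈ Finset.Ico 1 b, 1 / (a : ℝ) ^ 2 := by rw [Finset.mul_sum]
      _ ≤ (1 / (b : ℝ)) ^ 4 * 2 := by gcongr; exact sum_sq_le b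
      _ = _ := by ring
  have ht := t_le b
  generalize 1 / (b : ℝ) = t at *
  obtain ⟨t0, t1⟩ := ht
  generalize ∑ a ∈ Finset.Ico 1 b, row b a 2 = Y at *
  have key : |Y - (1 - 1 / 2 * t)| ≤ 3 * t ^ 2 := by
    have p3 : t ^ 3 ≤ t ^ 2 := pow_le_pow_of_le_one t0 t1 (by norm_num)
    have p4 : t ^ 4 ≤ t ^ 2 := pow_le_pow_of_le_one t0 t1 (by norm_num)
    have p5 : t ^ 5 ≤ t ^ 2 := pow_le_pow_of_le_one t0 t1 (by norm_num)
    have q2 : 0 ≤ t ^ 2 := by positivity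
    have q3 : 0 ≤ t ^ 3 := by positivity
    have q5 : 0 ≤ t ^ 5 := by positivity
    rw [abs_le] at *
    constructor <;> nlinarith
  calc _ = |t ^ 3 * (Y - (1 - 1 / 2 * t))| := by congr 1; ring
    _ = t ^ 3 * _ := by rw [abs_mul, abs_of_nonneg (by positivity)]
    _ ≤ t ^ 3 * (3 * t ^ 2) := by gcongr
    _ = _ := by ring

end Irwin

namespace Irwin
set_option linter.unusedSimpArgs false

lemma sumU (b d p : ℕ) (hdb : d < b) :
    ∑ c ∈ (Finset.range b).erase d, 1 / ((d : ℝ) + c / b) ^ p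
      = b * row b d p - (1 / ((d : ℝ) + d / b)) ^ p := by
  have hb0 : (b : ℝ) ≠ 0 := by exact_mod_cast (by omega : b ≠ 0)
  have h := Finset.add_sum_erase (Finset.range b) (fun c : ℕ => 1 / ((d : ℝ) + c / b) ^ p)
    (Finset.mem_range.2 hdb)
  unfold row
  rw [← Finset.mul_sum, ← mul_assoc, mul_one_div_cancel hb0, one_mul, ← h, one_div_pow]
  ring

lemma sumU' (b d p : ℕ) (hd : 1 ≤ d) (hdb : d < b) :
    ∑ a ∈ (Finset.Ico 1 b).erase d, 1 / ((a : ℝ) + d / b) ^ p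
      = Tf b d p - (1 / ((d : ℝ) + d / b)) ^ p := by
  have h := Finset.add_sum_erase (Finset.Ico 1 b) (fun a : ℕ => 1 / ((a : ℝ) + d / b) ^ p)
    (Finset.mem_Ico.2 ⟨hd, hdb⟩)
  unfold Tf
  rw [← h, one_div_pow]
  ring

lemma sumUU (b d : ℕ) (hd : 1 ≤ d) (hdb : d < b) :
    ∑ i ∈ (Finset.Ico 1 b).erase d ×ˢ (Finset.range b).erase d, 1 / ((i.1 : ℝ) + i.2 / b) ^ 2
      = b * (∑ a ∈ Finset.Ico 1 b, row b a 2 - row b d 2) - (Tf b d 2 - (1 / ((d : ℝ) + d / b)) ^ 2) := by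
  have hb0 : (b : ℝ) ≠ 0 := by exact_mod_cast (by omega : b ≠ 0)
  rw [Finset.sum_product]
  have h1 : ∀ a : ℕ, ∑ c ∈ (Finset.range b).erase d, 1 / ((a : ℝ) + c / b) ^ 2
      = b * row b a 2 - 1 / ((a : ℝ) + d / b) ^ 2 := by
    intro a
    have h := Finset.add_sum_erase (Finset.range b) (fun c : ℕ => 1 / ((a : ℝ) + c / b) ^ 2)
      (Finset.mem_range.2 hdb)
    unfold row
    rw [← Finset.mul_sum, ← mul_assoc, mul_one_div_cancel hb0, one_mul, ← h]
    ring
  simp only [h1]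
  rw [Finset.sum_sub_distrib, sumU' b d 2 hd hdb, ← Finset.mul_sum]
  have h := Finset.add_sum_erase (Finset.Ico 1 b) (fun a : ℕ => row b a 2)
    (Finset.mem_Ico.2 ⟨hd, hdb⟩)
  rw [← h]
  ring

lemma scale {b w X Y Z : ℝ} (h : |w| ≤ X) (e : b ^ 2 * X = Z) (e2 : Y = b ^ 2 * w) : |Y| ≤ Z := by
  rw [e2, ← e, abs_mul, abs_of_nonneg (sq_nonneg b)]
  gcongr

lemma piece1 (d : ℕ) (hd : 1 ≤ d) : ∃ C : ℝ, ∀ᶠ b : ℕ in atTop,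
    |(b : ℝ) ^ 2 * V b d 0 (d + d / b)
      - (-(((b : ℝ) * M b d 0 1) * (1 / ((d : ℝ) + d / b)) ^ 2)
        + (1 / (b : ℝ)) ^ 2 * (((b : ℝ) ^ 2 * M b d 0 2) * (1 / ((d : ℝ) + d / b)) ^ 3)
        - (1 / (b : ℝ)) ^ 3 * (((b : ℝ) ^ 2 * M b d 0 3) * (1 / ((d : ℝ) + d / b)) ^ 4)
        + (1 / (b : ℝ)) ^ 4 * (((b : ℝ) ^ 2 * M b d 0 4) * (1 / ((d : ℝ) + d / b)) ^ 5))|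
      ≤ C * (1 / (b : ℝ)) ^ 5 := by
  obtain ⟨C, hC0, hC⟩ := sumV d 0 5 (by norm_num)
  refine ⟨C, ?_⟩
  filter_upwards [eventually_gt_atTop 1, eventually_gt_atTop d] with b hb hdb
  have hb0 : (0 : ℝ) < b := by positivity
  have hd1 : (1 : ℝ) ≤ d := by exact_mod_cast hd
  have hA : 1 ≤ (d : ℝ) + d / b := by
    have : (0 : ℝ) ≤ d / b := by positivity
    linarith
  have h := hC b hb hdb Unit {()} (fun _ => (d : ℝ) + d / b) (fun _ _ => hA)
  simp only [Finset.sum_singleton, Finset.sum_range_succ, Finset.sum_range_zero, M_zero b d hdb] at h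
  have hW : 1 / ((d : ℝ) + d / b) ^ 2 ≤ 1 := by
    rw [div_le_one (by positivity)]; exact one_le_pow₀ hA
  replace h := h.trans (mul_le_mul_of_nonneg_left hW (by positivity))
  refine scale (b := (b : ℝ)) h (by simp only [Nat.reduceMul, Nat.reduceAdd, mul_zero, add_zero]; field_simp) ?_
  clear h
  simp only [one_div_pow ((d : ℝ) + d / b)]
  generalize V b d 0 (d + d / b) = v
  have : (d : ℝ) + d / b ≠ 0 := by positivity
  generalize (d : ℝ) + d / b = A at *
  simp only [Nat.reduceAdd, pow_zero, pow_one, mul_zero, zero_mul, zero_add]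
  field_simp
  ring

lemma piece2 (d : ℕ) (hd : 1 ≤ d) : ∃ C : ℝ, ∀ᶠ b : ℕ in atTop,
    |(b : ℝ) ^ 2 * ∑ c ∈ (Finset.range b).erase d, V b d 1 (d + c / b)
      - (-(((b : ℝ) ^ 3 * M b d 1 1) * ((1 / (b : ℝ)) * row b d 2 - (1 / (b : ℝ)) ^ 2 * (1 / ((d : ℝ) + d / b)) ^ 2))
        + ((b : ℝ) ^ 4 * M b d 1 2) * ((1 / (b : ℝ)) ^ 3 * row b d 3 - (1 / (b : ℝ)) ^ 4 * (1 / ((d : ℝ) + d / b)) ^ 3)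
        - ((b : ℝ) ^ 4 * M b d 1 3) * ((1 / (b : ℝ)) ^ 4 * row b d 4 - (1 / (b : ℝ)) ^ 5 * (1 / ((d : ℝ) + d / b)) ^ 4))|
      ≤ C * (1 / (b : ℝ)) ^ 5 := by
  obtain ⟨C, hC0, hC⟩ := sumV d 1 4 (by norm_num)
  refine ⟨C, ?_⟩
  filter_upwards [eventually_gt_atTop 1, eventually_gt_atTop d] with b hb hdb
  have hb0 : (0 : ℝ) < b := by positivity
  have hd1 : (1 : ℝ) ≤ d := by exact_mod_cast hd
  have hA : ∀ c : ℕ, 1 ≤ (d : ℝ) + c / b := fun c => by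
    have : (0 : ℝ) ≤ c / b := by positivity
    linarith
  have h := hC b hb hdb ℕ ((Finset.range b).erase d) (fun c => (d : ℝ) + c / b) (fun c _ => hA c)
  have hW : ∑ c ∈ (Finset.range b).erase d, 1 / ((d : ℝ) + c / b) ^ 2 ≤ (b : ℝ) := by
    calc _ ≤ ∑ c ∈ (Finset.range b).erase d, (1 : ℝ) := Finset.sum_le_sum fun c _ => by
          have := hA c
          rw [div_le_one (by positivity)]; exact one_le_pow₀ this
      _ ≤ ∑ c ∈ Finset.range b, (1 : ℝ) :=
          Finset.sum_le_sum_of_subset_of_nonneg (Finset.erase_subset _ _) (fun _ _ _ => zero_le_one)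
      _ = b := by simp
  replace h := h.trans (mul_le_mul_of_nonneg_left hW (by positivity))
  simp only [Finset.sum_range_succ, Finset.sum_range_zero, M_zero b d hdb, sumU b d _ hdb] at h
  refine scale (b := (b : ℝ)) h (by simp only [Nat.reduceMul, Nat.reduceAdd, mul_zero, add_zero]; field_simp) ?_
  clear h
  generalize ∑ c ∈ (Finset.range b).erase d, V b d 1 (d + c / b) = v
  generalize 1 / ((d : ℝ) + d / b) = A at *
  simp only [Nat.reduceAdd, pow_zero, pow_one, mul_zero, zero_mul, zero_add]
  field_simp
  ring

lemma piece3 (d : ℕ) (hd : 1 ≤ d) : ∃ C : ℝ, ∀ᶠ b : ℕ in atTop,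
    |(b : ℝ) ^ 2 * ∑ a ∈ (Finset.Ico 1 b).erase d, V b d 1 (a + d / b)
      - (-(((b : ℝ) ^ 3 * M b d 1 1) * ((1 / (b : ℝ)) ^ 2 * Tf b d 2 - (1 / (b : ℝ)) ^ 2 * (1 / ((d : ℝ) + d / b)) ^ 2))
        + ((b : ℝ) ^ 4 * M b d 1 2) * ((1 / (b : ℝ)) ^ 4 * Tf b d 3 - (1 / (b : ℝ)) ^ 4 * (1 / ((d : ℝ) + d / b)) ^ 3))|
      ≤ C * (1 / (b : ℝ)) ^ 5 := by
  obtain ⟨C, hC0, hC⟩ := sumV d 1 3 (by norm_num)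
  refine ⟨C * 2, ?_⟩
  filter_upwards [eventually_gt_atTop 1, eventually_gt_atTop d] with b hb hdb
  have hb0 : (0 : ℝ) < b := by positivity
  have hd1 : (1 : ℝ) ≤ d := by exact_mod_cast hd
  have hA : ∀ a ∈ (Finset.Ico 1 b).erase d, 1 ≤ (a : ℝ) + d / b := fun a ha => by
    have h1 : (1 : ℝ) ≤ a := by
      exact_mod_cast (Finset.mem_Ico.1 (Finset.mem_of_mem_erase ha)).1
    have : (0 : ℝ) ≤ d / b := by positivity
    linarith
  have h := hC b hb hdb ℕ ((Finset.Ico 1 b).erase d) (fun a => (a : ℝ) + d / b) hA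
  have hW : ∑ a ∈ (Finset.Ico 1 b).erase d, 1 / ((a : ℝ) + d / b) ^ 2 ≤ 2 := by
    calc _ ≤ ∑ a ∈ (Finset.Ico 1 b).erase d, 1 / (a : ℝ) ^ 2 := Finset.sum_le_sum fun a ha => by
          have h1 : 1 ≤ a := (Finset.mem_Ico.1 (Finset.mem_of_mem_erase ha)).1
          have h2 : (0 : ℝ) ≤ d / b := by positivity
          have h3 : (0 : ℝ) < a := by positivity
          gcongr
          linarith
      _ ≤ ∑ a ∈ Finset.Ico 1 b, 1 / (a : ℝ) ^ 2 :=
          Finset.sum_le_sum_of_subset_of_nonneg (Finset.erase_subset _ _) (fun _ _ _ => by positivity)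
      _ ≤ 2 := sum_sq_le b
  replace h := h.trans (mul_le_mul_of_nonneg_left hW (by positivity))
  simp only [Finset.sum_range_succ, Finset.sum_range_zero, M_zero b d hdb, sumU' b d _ hd hdb] at h
  refine scale (b := (b : ℝ)) h (by simp only [Nat.reduceMul, Nat.reduceAdd, mul_zero, add_zero]; field_simp) ?_
  clear h
  generalize ∑ a ∈ (Finset.Ico 1 b).erase d, V b d 1 (a + d / b) = v
  generalize 1 / ((d : ℝ) + d / b) = A at *
  simp only [Nat.reduceAdd, pow_zero, pow_one, mul_zero, zero_mul, zero_add]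
  field_simp

lemma piece4 (d : ℕ) (hd : 1 ≤ d) : ∃ C : ℝ, ∀ᶠ b : ℕ in atTop,
    |(b : ℝ) ^ 2 * ∑ a ∈ (Finset.Ico 1 b).erase d, ∑ c ∈ (Finset.range b).erase d, V b d 2 (a + c / b)
      - (-(((b : ℝ) ^ 5 * M b d 2 1) * (((1 / (b : ℝ)) ^ 3 * ∑ a ∈ Finset.Ico 1 b, row b a 2
        - (1 / (b : ℝ)) ^ 2 * ((1 / (b : ℝ)) * row b d 2))
        - ((1 / (b : ℝ)) ^ 2 * ((1 / (b : ℝ)) ^ 2 * Tf b d 2) - (1 / (b : ℝ)) ^ 4 * (1 / ((d : ℝ) + d / b)) ^ 2))))|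
      ≤ C * (1 / (b : ℝ)) ^ 5 := by
  obtain ⟨C, hC0, hC⟩ := sumV d 2 2 (by norm_num)
  refine ⟨C * 2, ?_⟩
  filter_upwards [eventually_gt_atTop 1, eventually_gt_atTop d] with b hb hdb
  have hb0 : (0 : ℝ) < b := by positivity
  have hd1 : (1 : ℝ) ≤ d := by exact_mod_cast hd
  have hA : ∀ i ∈ (Finset.Ico 1 b).erase d ×ˢ (Finset.range b).erase d, 1 ≤ (i.1 : ℝ) + i.2 / b := fun i hi => by
    have h1 : (1 : ℝ) ≤ i.1 := by
      exact_mod_cast (Finset.mem_Ico.1 (Finset.mem_of_mem_erase (Finset.mem_product.1 hi).1)).1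
    have : (0 : ℝ) ≤ i.2 / b := by positivity
    linarith
  have h := hC b hb hdb (ℕ × ℕ) ((Finset.Ico 1 b).erase d ×ˢ (Finset.range b).erase d)
    (fun i => (i.1 : ℝ) + i.2 / b) hA
  have hW : ∑ i ∈ (Finset.Ico 1 b).erase d ×ˢ (Finset.range b).erase d, 1 / ((i.1 : ℝ) + i.2 / b) ^ 2
      ≤ 2 * (b : ℝ) := by
    calc _ ≤ ∑ i ∈ (Finset.Ico 1 b).erase d ×ˢ (Finset.range b).erase d, 1 / (i.1 : ℝ) ^ 2 :=
          Finset.sum_le_sum fun i hi => by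
          have h1 : 1 ≤ i.1 :=
            (Finset.mem_Ico.1 (Finset.mem_of_mem_erase (Finset.mem_product.1 hi).1)).1
          have h2 : (0 : ℝ) ≤ i.2 / b := by positivity
          have h3 : (0 : ℝ) < i.1 := by positivity
          gcongr
          linarith
      _ ≤ ∑ i ∈ Finset.Ico 1 b ×ˢ Finset.range b, 1 / (i.1 : ℝ) ^ 2 :=
          Finset.sum_le_sum_of_subset_of_nonneg
            (Finset.product_subset_product (Finset.erase_subset _ _) (Finset.erase_subset _ _))
            (fun _ _ _ => by positivity)
      _ = b * ∑ a ∈ Finset.Ico 1 b, 1 / (a : ℝ) ^ 2 := by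
          rw [Finset.sum_product, Finset.mul_sum]
          simp
      _ ≤ b * 2 := by gcongr; exact sum_sq_le b
      _ = 2 * b := by ring
  replace h := h.trans (mul_le_mul_of_nonneg_left hW (by positivity))
  simp only [Finset.sum_range_succ, Finset.sum_range_zero, M_zero b d hdb, Nat.reduceAdd,
    sumUU b d hd hdb] at h
  rw [Finset.sum_product] at h
  refine scale (b := (b : ℝ)) h (by simp only [Nat.reduceMul, Nat.reduceAdd, mul_zero, add_zero]; field_simp) ?_
  clear h
  generalize ∑ a ∈ (Finset.Ico 1 b).erase d, ∑ c ∈ (Finset.range b).erase d, V b d 2 (a + c / b) = v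
  generalize ∑ a ∈ Finset.Ico 1 b, row b a 2 = w
  generalize 1 / ((d : ℝ) + d / b) = A at *
  simp only [Nat.reduceAdd, pow_zero, pow_one, mul_zero, zero_mul, zero_add]
  field_simp

end Irwin

namespace Irwin

lemma E.pow2 {f : ℕ → ℝ} {a0 a1 a2 a3 a4 : ℝ} (hf : E f a0 a1 a2 a3 a4) :
    E (fun b => f b ^ 2) (a0 * a0) (a0 * a1 + a1 * a0) (a0 * a2 + a1 * a1 + a2 * a0)
      (a0 * a3 + a1 * a2 + a2 * a1 + a3 * a0)
      (a0 * a4 + a1 * a3 + a2 * a2 + a3 * a1 + a4 * a0) :=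
  (hf.mul hf).congr (Eventually.of_forall fun b => by ring)

lemma E.sh2 {f : ℕ → ℝ} {a0 a1 a2 a3 a4 : ℝ} (hf : E f a0 a1 a2 a3 a4) :
    E (fun b => (1 / (b : ℝ)) ^ 2 * f b) 0 0 a0 a1 a2 :=
  hf.shift.shift.congr (Eventually.of_forall fun b => by ring)

lemma E.sh3 {f : ℕ → ℝ} {a0 a1 a2 a3 a4 : ℝ} (hf : E f a0 a1 a2 a3 a4) :
    E (fun b => (1 / (b : ℝ)) ^ 3 * f b) 0 0 0 a0 a1 :=
  hf.sh2.shift.congr (Eventually.of_forall fun b => by ring)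

lemma E.sh4 {f : ℕ → ℝ} {a0 a1 a2 a3 a4 : ℝ} (hf : E f a0 a1 a2 a3 a4) :
    E (fun b => (1 / (b : ℝ)) ^ 4 * f b) 0 0 0 0 a0 :=
  hf.sh3.shift.congr (Eventually.of_forall fun b => by ring)

lemma E.neg {f : ℕ → ℝ} {a0 a1 a2 a3 a4 : ℝ} (hf : E f a0 a1 a2 a3 a4) :
    E (fun b => -f b) (-a0) (-a1) (-a2) (-a3) (-a4) := by
  refine ((hf.const_mul (-1)).congr (Eventually.of_forall fun b => ?_)).coef ?_ ?_ ?_ ?_ ?_ <;> ring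

lemma Ex2 (d : ℕ) (hd : 1 ≤ d) : E (fun b : ℕ => (1 / ((d : ℝ) + d / b)) ^ 2)
    (1 / (d : ℝ) ^ 2) (-2 / (d : ℝ) ^ 2) (3 / (d : ℝ) ^ 2) (-4 / (d : ℝ) ^ 2) (5 / (d : ℝ) ^ 2) := by
  refine (Ex d hd).pow2.coef ?_ ?_ ?_ ?_ ?_ <;> ring

lemma Ex3 (d : ℕ) (hd : 1 ≤ d) : E (fun b : ℕ => (1 / ((d : ℝ) + d / b)) ^ 3)
    (1 / (d : ℝ) ^ 3) (-3 / (d : ℝ) ^ 3) (6 / (d : ℝ) ^ 3) (-10 / (d : ℝ) ^ 3) (15 / (d : ℝ) ^ 3) := by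
  refine (((Ex2 d hd).mul (Ex d hd)).congr (Eventually.of_forall fun b => ?_)).coef ?_ ?_ ?_ ?_ ?_ <;> ring

lemma Ex4 (d : ℕ) (hd : 1 ≤ d) : E (fun b : ℕ => (1 / ((d : ℝ) + d / b)) ^ 4)
    (1 / (d : ℝ) ^ 4) (-4 / (d : ℝ) ^ 4) (10 / (d : ℝ) ^ 4) (-20 / (d : ℝ) ^ 4) (35 / (d : ℝ) ^ 4) := by
  refine (((Ex3 d hd).mul (Ex d hd)).congr (Eventually.of_forall fun b => ?_)).coef ?_ ?_ ?_ ?_ ?_ <;> ring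

lemma Ex5 (d : ℕ) (hd : 1 ≤ d) : E (fun b : ℕ => (1 / ((d : ℝ) + d / b)) ^ 5)
    (1 / (d : ℝ) ^ 5) (-5 / (d : ℝ) ^ 5) (15 / (d : ℝ) ^ 5) (-35 / (d : ℝ) ^ 5) (70 / (d : ℝ) ^ 5) := by
  refine (((Ex4 d hd).mul (Ex d hd)).congr (Eventually.of_forall fun b => ?_)).coef ?_ ?_ ?_ ?_ ?_ <;> ring

lemma total_eq (b d : ℕ) (hb : 1 < b) (hd : 1 ≤ d) (hdb : d < b) :
    (b : ℝ) ^ 3 * (irwinSum b d 2 - b * Real.log b)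
      = (b : ℝ) ^ 2 * V b d 0 (d + d / b)
        + (b : ℝ) ^ 2 * ∑ c ∈ (Finset.range b).erase d, V b d 1 (d + c / b)
        + (b : ℝ) ^ 2 * ∑ a ∈ (Finset.Ico 1 b).erase d, V b d 1 (a + d / b)
        + (b : ℝ) ^ 2 * ∑ a ∈ (Finset.Ico 1 b).erase d, ∑ c ∈ (Finset.range b).erase d, V b d 2 (a + c / b) := by
  have hb0 : (b : ℝ) ≠ 0 := by positivity
  rw [irwin_dev_two b d hb hd hdb, ← Finset.mul_sum, Finset.sum_add_distrib]
  field_simp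
  ring

lemma t5_small {f : ℕ → ℝ} {a0 a1 a2 a3 a4 : ℝ} (hf : E f a0 a1 a2 a3 a4) :
    E (fun b => (1 / (b : ℝ)) ^ 5 * f b) 0 0 0 0 0 := E.of_bdd hf.bdd

lemma total_E (d : ℕ) (hd : 1 ≤ d) : E (fun b : ℕ => (b : ℝ) ^ 3 * (irwinSum b d 2 - b * Real.log b))
    (((d : ℝ) + 1 / 2) / (d : ℝ) ^ 2)
    (-((d : ℝ) + 1 / 2) / ((d : ℝ) ^ 2 * ((d : ℝ) + 1)))
    (((d : ℝ) + 1 / 2) * zetaR 2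
      - (30 * (d : ℝ) ^ 3 + 70 * (d : ℝ) ^ 2 + 47 * d + 10)
        / (12 * (d : ℝ) ^ 3 * ((d : ℝ) + 1) ^ 2))
    (-(2 * (d : ℝ) + 1) * d * zetaR 3 + (2 * (d : ℝ) + 1) * zetaR 2
      - (12 * (d : ℝ) ^ 6 - 60 * (d : ℝ) ^ 5 - 258 * (d : ℝ) ^ 4 - 342 * (d : ℝ) ^ 3
          - 212 * (d : ℝ) ^ 2 - 61 * d - 6)
        / (12 * (d : ℝ) ^ 4 * ((d : ℝ) + 1) ^ 3))
    (3 * ((d : ℝ) + 1 / 2) * (d : ℝ) ^ 2 * zetaR 4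
      - ((d : ℝ) + 1 / 2) * (6 * (d : ℝ) + 1) * zetaR 3
      - (60 * (d : ℝ) ^ 7 + 240 * (d : ℝ) ^ 6 + 440 * (d : ℝ) ^ 5 + 561 * (d : ℝ) ^ 4
          + 465 * (d : ℝ) ^ 3 + 219 * (d : ℝ) ^ 2 + 54 * d + 6)
        / (12 * (d : ℝ) ^ 5 * ((d : ℝ) + 1) ^ 3)) := by
  obtain ⟨C1, h1⟩ := piece1 d hd
  obtain ⟨C2, h2⟩ := piece2 d hd
  obtain ⟨C3, h3⟩ := piece3 d hd
  obtain ⟨C4, h4⟩ := piece4 d hd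
  have F1 := E.near (((((EP1 d).mul (Ex2 d hd)).neg.add ((EP2 d).mul (Ex3 d hd)).sh2).sub
    ((EP3 d).mul (Ex4 d hd)).sh3).add ((EP4 d).mul (Ex5 d hd)).sh4) C1 h1
  have F2 := E.near ((((EQ1 d).mul ((ES2 d hd).sub (Ex2 d hd).sh2)).neg.add
    ((EQ2 d).mul ((ES3 d hd).sub (Ex3 d hd).sh4))).sub
    ((EQ3 d).mul ((ES4 d hd).sub (t5_small (Ex4 d hd))))) C2 h2
  have F3 := E.near (((EQ1 d).mul ((ET2 d).sub (Ex2 d hd).sh2)).neg.add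
    ((EQ2 d).mul ((ET3 d).sub (Ex3 d hd).sh4))) C3 h3
  have F4 := E.near ((ER1 d).mul ((EQf.sub (ES2 d hd).sh2).sub ((ET2 d).sh2.sub (Ex2 d hd).sh4))).neg C4 h4
  have F := ((F1.add F2).add F3).add F4
  have hd0 : (d : ℝ) ≠ 0 := by positivity
  have hd1 : (d : ℝ) + 1 ≠ 0 := by positivity
  refine (F.congr ?_).coef ?_ ?_ ?_ ?_ ?_
  · filter_upwards [eventually_gt_atTop 1, eventually_gt_atTop d] with b hb hdb
    exact (total_eq b d hb hd hdb).symm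
  all_goals
    clear F F1 F2 F3 F4 h1 h2 h3 h4
    generalize zetaR 2 = z2
    generalize zetaR 3 = z3
    generalize zetaR 4 = z4
    generalize (d : ℝ) = D at *
    field_simp
    ring

end Irwin

theorem irwin_d_two_asymptotic (d : ℕ) (hd : 1 ≤ d) (a1 a2 a3 a4 a5 : ℝ)
    (h1 : a1 = ((d : ℝ) + 1 / 2) / (d : ℝ) ^ 2)
    (h2 : a2 = -((d : ℝ) + 1 / 2) / ((d : ℝ) ^ 2 * ((d : ℝ) + 1)))
    (h3 : a3 = ((d : ℝ) + 1 / 2) * zetaR 2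
      - (30 * (d : ℝ) ^ 3 + 70 * (d : ℝ) ^ 2 + 47 * d + 10)
        / (12 * (d : ℝ) ^ 3 * ((d : ℝ) + 1) ^ 2))
    (h4 : a4 = -(2 * (d : ℝ) + 1) * d * zetaR 3 + (2 * (d : ℝ) + 1) * zetaR 2
      - (12 * (d : ℝ) ^ 6 - 60 * (d : ℝ) ^ 5 - 258 * (d : ℝ) ^ 4 - 342 * (d : ℝ) ^ 3
          - 212 * (d : ℝ) ^ 2 - 61 * d - 6)
        / (12 * (d : ℝ) ^ 4 * ((d : ℝ) + 1) ^ 3))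
    (h5 : a5 = 3 * ((d : ℝ) + 1 / 2) * (d : ℝ) ^ 2 * zetaR 4
      - ((d : ℝ) + 1 / 2) * (6 * (d : ℝ) + 1) * zetaR 3
      - (60 * (d : ℝ) ^ 7 + 240 * (d : ℝ) ^ 6 + 440 * (d : ℝ) ^ 5 + 561 * (d : ℝ) ^ 4
          + 465 * (d : ℝ) ^ 3 + 219 * (d : ℝ) ^ 2 + 54 * d + 6)
        / (12 * (d : ℝ) ^ 5 * ((d : ℝ) + 1) ^ 3)) :
    (fun b : ℕ => irwinSum b d 2 -
      ((b : ℝ) * Real.log b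
        + a1 / (b : ℝ) ^ 3 + a2 / (b : ℝ) ^ 4 + a3 / (b : ℝ) ^ 5 + a4 / (b : ℝ) ^ 6
        + a5 / (b : ℝ) ^ 7))
      =O[atTop] fun b : ℕ => ((b : ℝ) ^ 8)⁻¹ := by
  have h := Irwin.total_E d hd
  rw [← h1, ← h2, ← h3, ← h4, ← h5] at h
  have h' := (isBigO_refl (fun b : ℕ => (1 / (b : ℝ)) ^ 3) atTop).mul h
  refine h'.congr' ?_ ?_
  · filter_upwards [eventually_gt_atTop 0] with b hb
    have hb0 : (b : ℝ) ≠ 0 := by positivity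
    field_simp
    ring
  · filter_upwards [eventually_gt_atTop 0] with b hb
    have hb0 : (b : ℝ) ≠ 0 := by positivity
    field_simp
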